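/- Assume h satisfies the control condition: there exist K, γ₀ > 0 such that |d·h'(c·d)| ≤ K(h(d)+1) for all d > 0 and all c with |c−1| ≤ γ₀. Let r be a minimizer of Î over 𝒜_λ. Then r is a solution of the original radial equilibrium equation (d/dR)[R^{n−1} Φ_{,1}(r(R))] = (n−1) R^{n−2} Φ_{,2}(r(R)) on (0,1), where Φ is the unmodified stored energy Φ(v₁,…,vₙ) = (κ/n)(v₁ⁿ + ⋯ + vₙⁿ) + h(v₁⋯vₙ). -/

import Mathlib

open Real MeasureTheory Filter Set
open scoped ENNReal NNReal

noncomputable section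

/-- Radial stored energy `Φ(q, v, …, v) = (κ/n)(qⁿ + (n−1)vⁿ) + h(q v^{n−1})`,
the restriction of `Φ(v₁,…,vₙ) = (κ/n)(v₁ⁿ+⋯+vₙⁿ) + h(v₁⋯vₙ)` to points
`(q, v, …, v)`. -/
def Phi (n : ℕ) (κ : ℝ) (h : ℝ → ℝ) (q v : ℝ) : ℝ :=
  (κ / n) * (q ^ n + ((n : ℝ) - 1) * v ^ n) + h (q * v ^ (n - 1))

/-- `Φ_{,1}(q, v, …, v) = κ q^{n−1} + v^{n−1} h'(q v^{n−1})`. -/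
def Phi1 (n : ℕ) (κ : ℝ) (h' : ℝ → ℝ) (q v : ℝ) : ℝ :=
  κ * q ^ (n - 1) + v ^ (n - 1) * h' (q * v ^ (n - 1))

/-- `Φ_{,2}(q, v, …, v) = κ v^{n−1} + q v^{n−2} h'(q v^{n−1})`. -/
def Phi2 (n : ℕ) (κ : ℝ) (h' : ℝ → ℝ) (q v : ℝ) : ℝ :=
  κ * v ^ (n - 1) + q * v ^ (n - 2) * h' (q * v ^ (n - 1))

/-- Radial Cauchy stress `T(q,v) = v^{1−n} Φ_{,1}(q,v,…,v) = κ(q/v)^{n−1} + h'(q v^{n−1})`. -/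
def Tstress (n : ℕ) (κ : ℝ) (h' : ℝ → ℝ) (q v : ℝ) : ℝ :=
  κ * (q / v) ^ (n - 1) + h' (q * v ^ (n - 1))

/-- The determinant function `δ(R) = r'(R) (r(R)/R)^{n−1}`. -/
def del (n : ℕ) (r r' : ℝ → ℝ) (R : ℝ) : ℝ :=
  r' R * (r R / R) ^ (n - 1)

/-- Hypotheses on `h : (0,∞) → [0,∞)`: it is `C²` with derivative `h'` and second
derivative `h''`, `h'' > 0`, `h(d) → ∞` as `d → 0⁺`, `h(d)/d → ∞` as `d → ∞`,
`h'(d) → −∞` as `d → 0⁺` and `h'(d) → ∞` as `d → ∞`. -/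
structure GoodH (h h' h'' : ℝ → ℝ) : Prop where
  nonneg : ∀ d : ℝ, 0 < d → 0 ≤ h d
  deriv1 : ∀ d : ℝ, 0 < d → HasDerivAt h (h' d) d
  deriv2 : ∀ d : ℝ, 0 < d → HasDerivAt h' (h'' d) d
  cont2 : ContinuousOn h'' (Set.Ioi 0)
  hpp_pos : ∀ d : ℝ, 0 < d → 0 < h'' d
  lim_zero : Tendsto h (nhdsWithin 0 (Set.Ioi 0)) atTop
  lim_growth : Tendsto (fun d => h d / d) atTop atTop
  dlim_zero : Tendsto h' (nhdsWithin 0 (Set.Ioi 0)) atBot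
  dlim_top : Tendsto h' atTop atTop

/-- `r ∈ C²((0,1])`, with `r, r' > 0` on `(0,1]`, solving the radial equilibrium
equation `(d/dR)[R^{n−1} Φ_{,1}(r(R))] = (n−1) R^{n−2} Φ_{,2}(r(R))`. -/
structure RadialSol (n : ℕ) (κ : ℝ) (h' : ℝ → ℝ) (r r' r'' : ℝ → ℝ) : Prop where
  pos : ∀ R ∈ Set.Ioc (0:ℝ) 1, 0 < r R
  derivPos : ∀ R ∈ Set.Ioc (0:ℝ) 1, 0 < r' R
  hasDeriv : ∀ R ∈ Set.Ioc (0:ℝ) 1, HasDerivWithinAt r (r' R) (Set.Ioc 0 1) R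
  hasDeriv2 : ∀ R ∈ Set.Ioc (0:ℝ) 1, HasDerivWithinAt r' (r'' R) (Set.Ioc 0 1) R
  cont2 : ContinuousOn r'' (Set.Ioc 0 1)
  equil : ∀ R ∈ Set.Ioc (0:ℝ) 1,
    HasDerivWithinAt (fun s => s ^ (n - 1) * Phi1 n κ h' (r' s) (r s / s))
      (((n : ℝ) - 1) * R ^ (n - 2) * Phi2 n κ h' (r' R) (r R / R)) (Set.Ioc 0 1) R


/-- Modified radial stored energy
`Φ̂(q,v,…,v) = (κ/n)qⁿ + h(q v^{n−1}) + κ q v^{n−1}((n−1)/n + ln(v^{n−1}))`. -/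
def PhiHat (n : ℕ) (κ : ℝ) (h : ℝ → ℝ) (q v : ℝ) : ℝ :=
  (κ / n) * q ^ n + h (q * v ^ (n - 1)) +
    κ * (q * v ^ (n - 1)) * (((n : ℝ) - 1) / n + ((n : ℝ) - 1) * Real.log v)

/-- `Φ̂_{,1}(q,v,…,v) = κ q^{n−1} + v^{n−1} h'(q v^{n−1}) + κ v^{n−1}((n−1)/n + (n−1) ln v)`. -/
def PhiHat1 (n : ℕ) (κ : ℝ) (h' : ℝ → ℝ) (q v : ℝ) : ℝ :=
  κ * q ^ (n - 1) + v ^ (n - 1) * h' (q * v ^ (n - 1)) +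
    κ * v ^ (n - 1) * (((n : ℝ) - 1) / n + ((n : ℝ) - 1) * Real.log v)

/-- `Φ̂_{,2}(q,v,…,v) = q v^{n−2}(h'(q v^{n−1}) + κ + κ(n−1)(1/n + ln v))`. -/
def PhiHat2 (n : ℕ) (κ : ℝ) (h' : ℝ → ℝ) (q v : ℝ) : ℝ :=
  q * v ^ (n - 2) *
    (h' (q * v ^ (n - 1)) + κ + κ * (((n : ℝ) - 1) * (1 / n + Real.log v)))

/-- Modified radial Cauchy stress
`T̂(q,v) = κ(q/v)^{n−1} + h'(q v^{n−1}) + (n−1)κ(1/n + ln v)`. -/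
def THat (n : ℕ) (κ : ℝ) (h' : ℝ → ℝ) (q v : ℝ) : ℝ :=
  κ * (q / v) ^ (n - 1) + h' (q * v ^ (n - 1)) +
    ((n : ℝ) - 1) * κ * (1 / n + Real.log v)

/-- `r ∈ C²((0,1])`, with `r, r' > 0` on `(0,1]`, solving the modified radial
equilibrium equation `(d/dR)[R^{n−1} Φ̂_{,1}(r(R))] = (n−1) R^{n−2} Φ̂_{,2}(r(R))`. -/
structure ModRadialSol (n : ℕ) (κ : ℝ) (h' : ℝ → ℝ) (r r' r'' : ℝ → ℝ) : Prop where
  pos : ∀ R ∈ Set.Ioc (0:ℝ) 1, 0 < r R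
  derivPos : ∀ R ∈ Set.Ioc (0:ℝ) 1, 0 < r' R
  hasDeriv : ∀ R ∈ Set.Ioc (0:ℝ) 1, HasDerivWithinAt r (r' R) (Set.Ioc 0 1) R
  hasDeriv2 : ∀ R ∈ Set.Ioc (0:ℝ) 1, HasDerivWithinAt r' (r'' R) (Set.Ioc 0 1) R
  cont2 : ContinuousOn r'' (Set.Ioc 0 1)
  equil : ∀ R ∈ Set.Ioc (0:ℝ) 1,
    HasDerivWithinAt (fun s => s ^ (n - 1) * PhiHat1 n κ h' (r' s) (r s / s))
      (((n : ℝ) - 1) * R ^ (n - 2) * PhiHat2 n κ h' (r' R) (r R / R)) (Set.Ioc 0 1) R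


/-- The admissible set `𝒜_λ`: `r ∈ W^{1,1}(0,1)` (absolutely continuous with
integrable derivative `r'`), `r(1) = λ`, `r' > 0` a.e. in `(0,1)` and `r(0) ≥ 0`. -/
structure Adm (lam : ℝ) (r r' : ℝ → ℝ) : Prop where
  intg : IntegrableOn r' (Set.Ioc 0 1)
  ftc : ∀ R ∈ Set.Icc (0:ℝ) 1, r R = r 0 + ∫ t in Set.Ioc 0 R, r' t
  derivPos : ∀ᵐ R ∂(volume.restrict (Set.Ioc (0:ℝ) 1)), 0 < r' R
  bc : r 1 = lam
  c0 : 0 ≤ r 0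

/-- The modified energy functional `Î`, valued in `EReal` (it is the integral of
`R^{n−1} Φ̂(r'(R), r(R)/R, …, r(R)/R)` minus `(κ(n−1)/n) λⁿ ln λ`, the integral being
defined as the difference of the lower integrals of the positive and negative parts). -/
def IHatE (n : ℕ) (κ lam : ℝ) (h : ℝ → ℝ) (r r' : ℝ → ℝ) : EReal :=
  (((∫⁻ R in Set.Ioc (0:ℝ) 1,
      ENNReal.ofReal (R ^ (n - 1) * PhiHat n κ h (r' R) (r R / R))) : ℝ≥0∞) : EReal)
  - (((∫⁻ R in Set.Ioc (0:ℝ) 1,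
      ENNReal.ofReal (-(R ^ (n - 1) * PhiHat n κ h (r' R) (r R / R)))) : ℝ≥0∞) : EReal)
  - ((κ * ((n : ℝ) - 1) / n * lam ^ n * Real.log lam : ℝ) : EReal)

/-!
Write `f(R, x, q) = R^{n−1} Φ̂(q, x/R, …, x/R)` for the integrand of `Î`. A minimizer `r` is
compared with the admissible curves of derivative `r'(1 + εψ)`, where `|ψ| ≤ 1` and `∫ r'ψ = 0`.
Such a variation rescales `r` and `r'` by factors close to `1`, so the control condition bounds
the `ε`-derivative of the integrand by a multiple of the integrable function `f(R, r, r')` plus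
integrable terms, and the energy may be differentiated under the integral sign. By Fubini the
vanishing first variation reads `∫ r'ψ (f_q + ∫_R^1 f_x) = 0`, and the du Bois-Reymond argument
with weight `r'` yields `f_q = c − ∫_R^1 f_x` almost everywhere.

The right-hand side is continuous and `q ↦ f_q(R, x, q)` is an increasing bijection of `(0,∞)`
onto `ℝ`, so `r'` agrees almost everywhere with a continuous positive function and the
Euler–Lagrange equation of `Φ̂` holds classically. Finally `Φ̂` and `Φ` differ by a null
Lagrangian and therefore have the same equilibrium equation.
-/

section Measure

theorem aemeasurable_comp_of_continuousOn {α β γ : Type*} [MeasurableSpace α]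
    [TopologicalSpace β] [MeasurableSpace β] [OpensMeasurableSpace β]
    [TopologicalSpace γ] [MeasurableSpace γ] [BorelSpace γ]
    {μ : Measure α} {s : Set β} {g : β → γ} {f : α → β} (hg : ContinuousOn g s)
    (hs : MeasurableSet s) (hf : AEMeasurable f μ) (hfs : ∀ᵐ x ∂μ, f x ∈ s) :
    AEMeasurable (fun x => g (f x)) μ := by
  refine AEMeasurable.comp_aemeasurable ?_ hf
  have hmem : ∀ᵐ y ∂μ.map f, y ∈ s := (ae_map_iff hf hs).2 hfs
  rw [← Measure.restrict_eq_self_of_ae_mem hmem]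
  exact hg.aemeasurable hs

theorem integrable_of_lintegral_pos_part_neg_part {α : Type*} [MeasurableSpace α]
    {μ : Measure α} {f : α → ℝ} (hf : AEMeasurable f μ)
    (hpos : ∫⁻ x, ENNReal.ofReal (f x) ∂μ < ∞) (hneg : ∫⁻ x, ENNReal.ofReal (-f x) ∂μ < ∞) :
    Integrable f μ := by
  refine ⟨hf.aestronglyMeasurable, ?_⟩
  have henorm : ∀ y : ℝ, ‖y‖ₑ = ENNReal.ofReal y + ENNReal.ofReal (-y) := by
    intro y
    rcases le_total 0 y with hy | hy
    · rw [ENNReal.ofReal_of_nonpos (neg_nonpos.2 hy), add_zero, Real.enorm_of_nonneg hy]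
    · rw [ENNReal.ofReal_of_nonpos hy, zero_add, ← enorm_neg,
        Real.enorm_of_nonneg (neg_nonneg.2 hy)]
  simp_rw [HasFiniteIntegral, henorm]
  rw [lintegral_add_left' hf.ennreal_ofReal]
  exact ENNReal.add_lt_top.2 ⟨hpos, hneg⟩

theorem coe_lintegral_sub_coe_lintegral_neg {α : Type*} [MeasurableSpace α] {μ : Measure α}
    {f : α → ℝ} (hf : Integrable f μ) :
    ((∫⁻ x, ENNReal.ofReal (f x) ∂μ : ℝ≥0∞) : EReal) -
      ((∫⁻ x, ENNReal.ofReal (-f x) ∂μ : ℝ≥0∞) : EReal) = (∫ x, f x ∂μ : ℝ) := by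
  have hneg : ∫⁻ x, ENNReal.ofReal (-f x) ∂μ ≠ ∞ := hf.neg.lintegral_lt_top.ne
  rw [integral_eq_lintegral_pos_part_sub_lintegral_neg_part hf, EReal.coe_sub,
    EReal.coe_ennreal_toReal hf.lintegral_lt_top.ne, EReal.coe_ennreal_toReal hneg]

theorem integrable_of_coe_lintegral_sub_coe_lintegral_neg_ne_top {α : Type*} [MeasurableSpace α]
    {μ : Measure α} {f : α → ℝ} (hf : AEMeasurable f μ)
    (hneg : ∫⁻ x, ENNReal.ofReal (-f x) ∂μ < ∞)
    (htop : ((∫⁻ x, ENNReal.ofReal (f x) ∂μ : ℝ≥0∞) : EReal) -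
      ((∫⁻ x, ENNReal.ofReal (-f x) ∂μ : ℝ≥0∞) : EReal) ≠ ⊤) : Integrable f μ := by
  refine integrable_of_lintegral_pos_part_neg_part hf (lt_top_iff_ne_top.2 fun hpos => htop ?_) hneg
  rw [hpos, ← ENNReal.ofReal_toReal hneg.ne, EReal.coe_ennreal_top, EReal.coe_ennreal_ofReal]
  exact EReal.top_sub_coe _

theorem integral_mul_indicator_sub_const {α : Type*} [MeasurableSpace α] {μ : Measure α}
    {u : α → ℝ} (hu : Integrable u μ) {A : Set α} (hA : MeasurableSet A) (m : ℝ) :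
    ∫ x, u x * (A.indicator 1 x - m) ∂μ = (∫ x in A, u x ∂μ) - m * ∫ x, u x ∂μ := by
  rw [← integral_indicator hA, ← integral_const_mul,
    ← integral_sub (hu.indicator hA) (hu.const_mul m)]
  congr 1 with x
  by_cases hx : x ∈ A <;> simp [hx] <;> ring

theorem setIntegral_mul_eq_of_forall_integral_mul_eq_zero {α : Type*} [MeasurableSpace α]
    {μ : Measure α} {w g : α → ℝ} (hw : Integrable w μ) (hw0 : 0 ≤ᵐ[μ] w)
    (hwg : Integrable (fun x => w x * g x) μ)
    (horth : ∀ ψ : α → ℝ, Measurable ψ → (∀ x, |ψ x| ≤ 1) → ∫ x, w x * ψ x ∂μ = 0 →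
      ∫ x, w x * ψ x * g x ∂μ = 0) {A : Set α} (hA : MeasurableSet A) :
    ∫ x in A, w x * g x ∂μ = (∫ x in A, w x ∂μ) / (∫ x, w x ∂μ) * ∫ x, w x * g x ∂μ := by
  set W := ∫ x, w x ∂μ
  set m := (∫ x in A, w x ∂μ) / W
  have hWA : ∫ x in A, w x ∂μ ≤ W := setIntegral_le_integral hw hw0
  have hA0 : 0 ≤ ∫ x in A, w x ∂μ := integral_nonneg_of_ae (ae_restrict_of_ae hw0)
  have hm0 : 0 ≤ m := div_nonneg hA0 (hA0.trans hWA)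
  have hm1 : m ≤ 1 := div_le_one_of_le₀ hWA (hA0.trans hWA)
  have hmW : m * W = ∫ x in A, w x ∂μ :=
    div_mul_cancel_of_imp fun h0 => le_antisymm (hWA.trans h0.le) hA0
  have htest := horth (fun x => A.indicator 1 x - m)
    ((measurable_const.indicator hA).sub_const m)
    (fun x => by
      by_cases hx : x ∈ A <;> simp [hx, abs_le] <;> constructor <;> linarith)
    (by rw [integral_mul_indicator_sub_const hw hA, hmW, sub_self])
  simp_rw [mul_right_comm (w _)] at htest
  rw [integral_mul_indicator_sub_const hwg hA] at htest
  linarith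

theorem ae_eq_const_of_forall_integral_mul_eq_zero {α : Type*} [MeasurableSpace α]
    {μ : Measure α} {w g : α → ℝ} (hw : Integrable w μ) (hwpos : ∀ᵐ x ∂μ, 0 < w x)
    (hwg : Integrable (fun x => w x * g x) μ)
    (horth : ∀ ψ : α → ℝ, Measurable ψ → (∀ x, |ψ x| ≤ 1) → ∫ x, w x * ψ x ∂μ = 0 →
      ∫ x, w x * ψ x * g x ∂μ = 0) :
    ∃ c, ∀ᵐ x ∂μ, g x = c := by
  set c := (∫ x, w x * g x ∂μ) / ∫ x, w x ∂μ with hc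
  have hzero : (fun x => w x * g x - c * w x) =ᵐ[μ] 0 := by
    refine (hwg.sub (hw.const_mul c)).ae_eq_zero_of_forall_setIntegral_eq_zero fun A hA _ => ?_
    rw [integral_sub' hwg.integrableOn (hw.const_mul c).integrableOn, integral_const_mul,
      setIntegral_mul_eq_of_forall_integral_mul_eq_zero hw (hwpos.mono fun _ hx => hx.le) hwg
        horth hA, hc]
    ring
  refine ⟨c, ?_⟩
  filter_upwards [hzero, hwpos] with x hx hxpos
  have hfactor : w x * (g x - c) = 0 := by
    rw [mul_sub, mul_comm (w x) c]
    exact hx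
  exact sub_eq_zero.1 ((mul_eq_zero.1 hfactor).resolve_left hxpos.ne')

theorem integral_deriv_eq_zero_of_forall_integral_le {α : Type*} [MeasurableSpace α]
    {μ : Measure α} {F F' : ℝ → α → ℝ} {G : α → ℝ} {δ : ℝ} (hδ : 0 < δ)
    (hmeas : ∀ ε ∈ Metric.ball (0 : ℝ) δ, AEStronglyMeasurable (F ε) μ)
    (hmeas' : AEStronglyMeasurable (F' 0) μ) (hint : Integrable (F 0) μ)
    (hderiv : ∀ᵐ x ∂μ, ∀ ε ∈ Metric.ball (0 : ℝ) δ, HasDerivAt (F · x) (F' ε x) ε)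
    (hG : Integrable G μ) (hbound : ∀ᵐ x ∂μ, ∀ ε ∈ Metric.ball (0 : ℝ) δ, |F' ε x| ≤ G x)
    (hmin : ∀ ε ∈ Metric.ball (0 : ℝ) δ, Integrable (F ε) μ →
      ∫ x, F 0 x ∂μ ≤ ∫ x, F ε x ∂μ) :
    ∫ x, F' 0 x ∂μ = 0 := by
  have hball : Metric.ball (0 : ℝ) δ ∈ nhds 0 := Metric.ball_mem_nhds 0 hδ
  have hintε : ∀ ε ∈ Metric.ball (0 : ℝ) δ, Integrable (F ε) μ := by
    intro ε hε
    have hdiff : Integrable (fun x => F ε x - F 0 x) μ := by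
      refine (hG.mul_const ‖ε - 0‖).mono' ((hmeas ε hε).sub hint.1) ?_
      filter_upwards [hderiv, hbound] with x hd hb
      exact (convex_ball 0 δ).norm_image_sub_le_of_norm_hasDerivWithin_le
        (fun e he => (hd e he).hasDerivWithinAt) hb (Metric.mem_ball_self hδ) hε
    exact (hdiff.add hint).congr (.of_forall fun x => sub_add_cancel _ _)
  have hd := (hasDerivAt_integral_of_dominated_loc_of_deriv_le hball
    (eventually_of_mem hball hmeas) hint hmeas' hbound hG hderiv).2
  refine IsLocalMin.hasDerivAt_eq_zero ?_ hd
  exact eventually_of_mem hball fun ε hε => hmin ε hε (hintε ε hε)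

theorem setIntegral_Ioc_indicator_Iic {a b x : ℝ} (hx : x ∈ Ioc a b) (v : ℝ → ℝ) :
    ∫ t in Ioc a b, (Iic x).indicator v t = ∫ t in Ioc a x, v t := by
  rw [setIntegral_indicator measurableSet_Iic, Ioc_inter_Iic, min_eq_right hx.2]

theorem setIntegral_Ioc_indicator_Ici {a b t : ℝ} (ht : t ∈ Ioc a b) (v : ℝ → ℝ) :
    ∫ x in Ioc a b, (Ici t).indicator v x = ∫ x in Ioc t b, v x := by
  rw [setIntegral_indicator measurableSet_Ici, ← integral_Icc_eq_integral_Ioc]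
  congr 2
  ext x
  simp only [mem_inter_iff, mem_Ioc, mem_Ici, mem_Icc] at *
  grind

theorem integrable_prod_mul_indicator_Iic {a b : ℝ} {u w : ℝ → ℝ}
    (hu : IntegrableOn u (Ioc a b)) (hw : AEStronglyMeasurable w (volume.restrict (Ioc a b)))
    (hwu : IntegrableOn (fun x => w x * ∫ t in Ioc a x, |u t|) (Ioc a b)) :
    Integrable (Function.uncurry fun x t => w x * (Iic x).indicator u t)
      ((volume.restrict (Ioc a b)).prod (volume.restrict (Ioc a b))) := by
  have hmeas : AEStronglyMeasurable (Function.uncurry fun x t => w x * (Iic x).indicator u t)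
      ((volume.restrict (Ioc a b)).prod (volume.restrict (Ioc a b))) := by
    have hset : MeasurableSet {p : ℝ × ℝ | p.2 ≤ p.1} :=
      measurableSet_le measurable_snd measurable_fst
    refine ((hw.comp_fst.mul hu.1.comp_snd).indicator hset).congr (.of_forall fun ⟨x, t⟩ => ?_)
    by_cases htx : t ≤ x <;> simp [htx]
  have hnorm : ∀ x t, ‖w x * (Iic x).indicator u t‖ =
      |w x| * (Iic x).indicator (fun t => |u t|) t := by
    intro x t
    by_cases htx : t ≤ x <;> simp [htx]
  refine (integrable_prod_iff hmeas).2 ⟨.of_forall fun x =>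
    (hu.indicator measurableSet_Iic).const_mul (w x), ?_⟩
  refine IntegrableOn.congr_fun (Integrable.norm hwu) (fun x hx => ?_) measurableSet_Ioc
  simp only [Function.uncurry_apply_pair, hnorm]
  rw [integral_const_mul, setIntegral_Ioc_indicator_Iic hx, norm_mul, Real.norm_eq_abs,
    Real.norm_eq_abs, abs_of_nonneg (integral_nonneg fun t => abs_nonneg (u t))]

theorem integral_mul_primitive_eq_integral_mul_tail {a b : ℝ} {u w : ℝ → ℝ}
    (hu : IntegrableOn u (Ioc a b)) (hw : AEStronglyMeasurable w (volume.restrict (Ioc a b)))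
    (hwu : IntegrableOn (fun x => w x * ∫ t in Ioc a x, |u t|) (Ioc a b)) :
    IntegrableOn (fun t => u t * ∫ x in Ioc t b, w x) (Ioc a b) ∧
      ∫ x in Ioc a b, w x * ∫ t in Ioc a x, u t =
        ∫ t in Ioc a b, u t * ∫ x in Ioc t b, w x := by
  have hint := integrable_prod_mul_indicator_Iic hu hw hwu
  have hleft : ∀ x ∈ Ioc a b, ∫ t in Ioc a b, w x * (Iic x).indicator u t =
      w x * ∫ t in Ioc a x, u t := by
    intro x hx
    rw [integral_const_mul, setIntegral_Ioc_indicator_Iic hx]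
  have hright : ∀ t ∈ Ioc a b, ∫ x in Ioc a b, w x * (Iic x).indicator u t =
      u t * ∫ x in Ioc t b, w x := by
    intro t ht
    have hswap : ∀ x, w x * (Iic x).indicator u t = u t * (Ici t).indicator w x := by
      intro x
      by_cases htx : t ≤ x <;> simp [htx, mul_comm]
    simp_rw [hswap]
    rw [integral_const_mul, setIntegral_Ioc_indicator_Ici ht]
  refine ⟨IntegrableOn.congr_fun hint.integral_prod_right hright measurableSet_Ioc, ?_⟩
  rw [← setIntegral_congr_fun measurableSet_Ioc hleft, integral_integral_swap hint,
    setIntegral_congr_fun measurableSet_Ioc hright]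

end Measure

section Calculus

theorem Icc_mem_nhdsWithin_Ioc {a b c x : ℝ} (hcx : c < x) : Icc c b ∈ nhdsWithin x (Ioc a b) := by
  filter_upwards [mem_nhdsWithin_of_mem_nhds (Ioi_mem_nhds hcx), self_mem_nhdsWithin]
    with y hy hyb using ⟨le_of_lt hy, hyb.2⟩

theorem hasDerivWithinAt_tail_integral {a b R : ℝ} {f : ℝ → ℝ} (hf : ContinuousOn f (Ioc a b))
    (hR : R ∈ Ioc a b) :
    HasDerivWithinAt (fun x => ∫ t in Ioc x b, f t) (-f R) (Ioc a b) R := by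
  obtain ⟨c, hac, hcR⟩ := exists_between hR.1
  have hsub : Icc c b ⊆ Ioc a b := fun x hx => ⟨hac.trans_le hx.1, hx.2⟩
  have hRc : R ∈ Icc c b := ⟨hcR.le, hR.2⟩
  have : Fact (R ∈ Icc c b) := ⟨hRc⟩
  have hcont := hf.mono hsub
  have hint : IntervalIntegrable f volume R b :=
    (hcont.mono (uIcc_subset_Icc hRc (right_mem_Icc.2 (hRc.1.trans hRc.2)))).intervalIntegrable
  have hderiv : HasDerivWithinAt (fun x => ∫ t in x..b, f t) (-f R) (Icc c b) R :=
    intervalIntegral.integral_hasDerivWithinAt_left hint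
      (hcont.stronglyMeasurableAtFilter_nhdsWithin measurableSet_Icc R) (hcont R hRc)
  refine (hderiv.mono_of_mem_nhdsWithin (Icc_mem_nhdsWithin_Ioc hcR)).congr (fun x hx => ?_) ?_
  · rw [intervalIntegral.integral_of_le hx.2]
  · rw [intervalIntegral.integral_of_le hR.2]

theorem continuousOn_primitive_Ioc {a b : ℝ} {w : ℝ → ℝ} (hw : IntegrableOn w (Ioc a b)) :
    ContinuousOn (fun x => ∫ t in Ioc a x, w t) (Icc a b) :=
  intervalIntegral.continuousOn_primitive
    ((integrableOn_Icc_iff_integrableOn_Ioc (by finiteness)).2 hw)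

theorem aestronglyMeasurable_primitive_Ioc {a b : ℝ} {w : ℝ → ℝ} (hw : IntegrableOn w (Ioc a b)) :
    AEStronglyMeasurable (fun x => ∫ t in Ioc a x, w t) (volume.restrict (Ioc a b)) :=
  ((continuousOn_primitive_Ioc hw).mono Ioc_subset_Icc_self).aestronglyMeasurable measurableSet_Ioc

theorem continuousOn_tail_integral {a b : ℝ} {w : ℝ → ℝ}
    (hw : ∀ c, a < c → IntegrableOn w (Ioc c b)) :
    ContinuousOn (fun x => ∫ t in Ioc x b, w t) (Ioc a b) := by
  intro R hR
  obtain ⟨c, hac, hcR⟩ := exists_between hR.1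
  have hcb : c ≤ b := hcR.le.trans hR.2
  have hint : IntegrableOn w (uIcc c b) := by
    rw [uIcc_of_le hcb]
    exact (integrableOn_Icc_iff_integrableOn_Ioc (by finiteness)).2 (hw c hac)
  have hcont := intervalIntegral.continuousOn_primitive_interval_left hint R
    (by rw [uIcc_of_le hcb]; exact ⟨hcR.le, hR.2⟩)
  rw [uIcc_of_le hcb] at hcont
  refine (hcont.mono_of_mem_nhdsWithin (Icc_mem_nhdsWithin_Ioc hcR)).congr (fun x hx => ?_) ?_
  · rw [intervalIntegral.integral_of_le hx.2]
  · rw [intervalIntegral.integral_of_le hR.2]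

theorem continuousOn_of_strictMonoOn_eq {X : Type*} [TopologicalSpace X] {S : Set X}
    {g : X → ℝ → ℝ} {y ρ : X → ℝ} (hmono : ∀ x ∈ S, StrictMonoOn (g x) (Ioi 0))
    (hg : ∀ q, 0 < q → ContinuousOn (fun x => g x q) S) (hy : ContinuousOn y S)
    (hρ : ∀ x ∈ S, 0 < ρ x) (heq : ∀ x ∈ S, g x (ρ x) = y x) :
    ContinuousOn ρ S := by
  intro x₀ hx₀
  refine tendsto_order.2 ⟨fun q hq => ?_, fun q hq => ?_⟩
  · rcases le_or_gt q 0 with hq0 | hq0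
    · filter_upwards [self_mem_nhdsWithin] with x hx using hq0.trans_lt (hρ x hx)
    · have hlt : g x₀ q < y x₀ := heq x₀ hx₀ ▸ hmono x₀ hx₀ hq0 (hρ x₀ hx₀) hq
      filter_upwards [(hg q hq0 x₀ hx₀).eventually_lt (hy x₀ hx₀) hlt, self_mem_nhdsWithin]
        with x hlt' hx
      rw [← heq x hx] at hlt'
      exact ((hmono x hx).lt_iff_lt hq0 (hρ x hx)).1 hlt'
  · have hq0 : 0 < q := (hρ x₀ hx₀).trans hq
    have hlt : y x₀ < g x₀ q := heq x₀ hx₀ ▸ hmono x₀ hx₀ (hρ x₀ hx₀) hq0 hq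
    filter_upwards [(hy x₀ hx₀).eventually_lt (hg q hq0 x₀ hx₀) hlt, self_mem_nhdsWithin]
      with x hlt' hx
    rw [← heq x hx] at hlt'
    exact ((hmono x hx).lt_iff_lt (hρ x hx) hq0).1 hlt'

end Calculus

/-- Joint continuity of `g(R, x, q)` on the set where all three arguments are positive, the domain
of the integrands considered here. -/
def ContinuousOnOctant (g : ℝ → ℝ → ℝ → ℝ) : Prop :=
  ContinuousOn (fun p : ℝ × ℝ × ℝ => g p.1 p.2.1 p.2.2) (Ioi 0 ×ˢ Ioi 0 ×ˢ Ioi 0)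

theorem ContinuousOnOctant.comp {g : ℝ → ℝ → ℝ → ℝ} (hg : ContinuousOnOctant g) {S : Set ℝ}
    (hS : S ⊆ Ioi 0) {x q : ℝ → ℝ} (hx : ContinuousOn x S) (hxpos : ∀ R ∈ S, 0 < x R)
    (hq : ContinuousOn q S) (hqpos : ∀ R ∈ S, 0 < q R) :
    ContinuousOn (fun R => g R (x R) (q R)) S :=
  ContinuousOn.comp hg (continuousOn_id.prodMk (hx.prodMk hq))
    fun R hR => ⟨hS hR, hxpos R hR, hqpos R hR⟩

theorem one_add_mul_pos {ε ψ : ℝ} (hε : |ε| ≤ 1 / 2) (hψ : |ψ| ≤ 1) : 0 < 1 + ε * ψ := by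
  have h : |ε * ψ| ≤ 1 / 2 * 1 := abs_mul ε ψ ▸ mul_le_mul hε hψ (abs_nonneg _) (by norm_num)
  linarith [neg_abs_le (ε * ψ)]

namespace Adm

variable {lam : ℝ} {r r' : ℝ → ℝ}

theorem continuousOn (ha : Adm lam r r') : ContinuousOn r (Icc 0 1) :=
  ((continuousOn_primitive_Ioc ha.intg).const_add (r 0)).congr ha.ftc

theorem pos (ha : Adm lam r r') {R : ℝ} (hR : R ∈ Ioc (0 : ℝ) 1) : 0 < r R := by
  have hsub : Ioc 0 R ⊆ Ioc (0 : ℝ) 1 := Ioc_subset_Ioc_right hR.2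
  have hpos := ae_restrict_of_ae_restrict_of_subset hsub ha.derivPos
  have hint : 0 < ∫ t in Ioc 0 R, r' t := by
    rw [integral_pos_iff_support_of_nonneg_ae (hpos.mono fun _ ht => ht.le)
      (ha.intg.mono_set hsub), measure_congr (t := univ)]
    · simpa using hR.1
    · filter_upwards [hpos] with t ht using propext ⟨fun _ => trivial, fun _ => ht.ne'⟩
  rw [ha.ftc R (Ioc_subset_Icc_self hR)]
  linarith [ha.c0]

theorem bc_pos (ha : Adm lam r r') : 0 < lam := ha.bc ▸ ha.pos (right_mem_Ioc.2 one_pos)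

theorem eq_sub_tail_integral (ha : Adm lam r r') {R : ℝ} (hR : R ∈ Icc (0 : ℝ) 1) :
    r R = lam - ∫ t in Ioc R 1, r' t := by
  have hsplit := setIntegral_union (Ioc_disjoint_Ioc_of_le le_rfl) measurableSet_Ioc
    (ha.intg.mono_set (Ioc_subset_Ioc_right hR.2)) (ha.intg.mono_set (Ioc_subset_Ioc_left hR.1))
  rw [Ioc_union_Ioc_eq_Ioc hR.1 hR.2] at hsplit
  rw [← ha.bc, ha.ftc 1 (right_mem_Icc.2 zero_le_one), hsplit, ha.ftc R hR]
  ring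

theorem le_bc (ha : Adm lam r r') {R : ℝ} (hR : R ∈ Icc (0 : ℝ) 1) : r R ≤ lam := by
  have hpos := ae_restrict_of_ae_restrict_of_subset (Ioc_subset_Ioc_left hR.1) ha.derivPos
  have hint : 0 ≤ ∫ t in Ioc R 1, r' t := integral_nonneg_of_ae (hpos.mono fun _ ht => ht.le)
  linarith [ha.eq_sub_tail_integral hR]

theorem ae_pos (ha : Adm lam r r') : ∀ᵐ R ∂volume.restrict (Ioc (0 : ℝ) 1),
    R ∈ Ioc (0 : ℝ) 1 ∧ 0 < r R ∧ 0 < r' R := by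
  filter_upwards [ha.derivPos, ae_restrict_mem measurableSet_Ioc] with R hr' hR
  exact ⟨hR, ha.pos hR, hr'⟩

theorem aestronglyMeasurable (ha : Adm lam r r') :
    AEStronglyMeasurable r (volume.restrict (Ioc 0 1)) :=
  (ha.continuousOn.mono Ioc_subset_Icc_self).aestronglyMeasurable measurableSet_Ioc

theorem aestronglyMeasurable_comp (ha : Adm lam r r') {g : ℝ → ℝ → ℝ → ℝ}
    (hg : ContinuousOnOctant g) :
    AEStronglyMeasurable (fun R => g R (r R) (r' R)) (volume.restrict (Ioc 0 1)) := by
  have hcurve : AEMeasurable (fun R => (R, r R, r' R)) (volume.restrict (Ioc 0 1)) :=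
    aemeasurable_id.prodMk (ha.aestronglyMeasurable.aemeasurable.prodMk ha.intg.1.aemeasurable)
  have hmem : ∀ᵐ R ∂volume.restrict (Ioc (0 : ℝ) 1),
      (R, r R, r' R) ∈ Ioi (0 : ℝ) ×ˢ Ioi (0 : ℝ) ×ˢ Ioi (0 : ℝ) :=
    ha.ae_pos.mono fun R ⟨hR, hr, hr'⟩ => ⟨hR.1, hr, hr'⟩
  exact (aemeasurable_comp_of_continuousOn hg
    (measurableSet_Ioi.prod (measurableSet_Ioi.prod measurableSet_Ioi)) hcurve
    hmem).aestronglyMeasurable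

theorem integrableOn_deriv_mul (ha : Adm lam r r') {ψ : ℝ → ℝ} (hψ : Measurable ψ)
    (hψ1 : ∀ R, |ψ R| ≤ 1) : IntegrableOn (fun t => r' t * ψ t) (Ioc 0 1) :=
  ha.intg.mul_bdd (c := 1) hψ.aestronglyMeasurable (.of_forall hψ1)

theorem integral_abs_deriv_mul_le (ha : Adm lam r r') {ψ : ℝ → ℝ} (hψ : Measurable ψ)
    (hψ1 : ∀ R, |ψ R| ≤ 1) {R : ℝ} (hR : R ∈ Icc (0 : ℝ) 1) :
    ∫ t in Ioc 0 R, |r' t * ψ t| ≤ r R := by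
  have hsub : Ioc 0 R ⊆ Ioc (0 : ℝ) 1 := Ioc_subset_Ioc_right hR.2
  have hle : ∫ t in Ioc 0 R, |r' t * ψ t| ≤ ∫ t in Ioc 0 R, r' t := by
    refine integral_mono_ae ((ha.integrableOn_deriv_mul hψ hψ1).mono_set hsub).abs
      (ha.intg.mono_set hsub) ?_
    filter_upwards [ae_restrict_of_ae_restrict_of_subset hsub ha.derivPos] with t ht
    rw [abs_mul, abs_of_pos ht]
    exact mul_le_of_le_one_right ht.le (hψ1 t)
  linarith [ha.ftc R hR, ha.c0]

theorem variation (ha : Adm lam r r') {ψ : ℝ → ℝ} (hψ : Measurable ψ)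
    (hψ1 : ∀ R, |ψ R| ≤ 1) (hψ0 : ∫ t in Ioc 0 1, r' t * ψ t = 0) {ε : ℝ} (hε : |ε| ≤ 1 / 2) :
    Adm lam (fun R => r R + ε * ∫ t in Ioc 0 R, r' t * ψ t) (fun R => r' R * (1 + ε * ψ R)) := by
  have hint := ha.integrableOn_deriv_mul hψ hψ1
  have hexpand : (fun R => r' R * (1 + ε * ψ R)) = fun R => r' R + ε * (r' R * ψ R) := by
    ext R; ring
  constructor
  case intg =>
    rw [hexpand]
    exact ha.intg.add (hint.const_mul ε)
  case ftc =>
    intro R hR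
    have hsub : Ioc 0 R ⊆ Ioc (0 : ℝ) 1 := Ioc_subset_Ioc_right hR.2
    rw [hexpand, integral_add (ha.intg.mono_set hsub) ((hint.mono_set hsub).const_mul ε),
      integral_const_mul, ha.ftc R hR]
    simp [add_assoc]
  case derivPos =>
    filter_upwards [ha.derivPos] with R hR using mul_pos hR (one_add_mul_pos hε (hψ1 R))
  case bc => simp [hψ0, ha.bc]
  case c0 => simp [ha.c0]

theorem hasDerivWithinAt (ha : Adm lam r r') {ρ : ℝ → ℝ} (hρ : ContinuousOn ρ (Ioc 0 1))
    (hae : r' =ᵐ[volume.restrict (Ioc 0 1)] ρ) {R : ℝ} (hR : R ∈ Ioc (0 : ℝ) 1) :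
    HasDerivWithinAt r (ρ R) (Ioc 0 1) R := by
  have heq : ∀ x ∈ Ioc (0 : ℝ) 1, r x = lam - ∫ t in Ioc x 1, ρ t := by
    intro x hx
    rw [ha.eq_sub_tail_integral (Ioc_subset_Icc_self hx), integral_congr_ae
      (ae_restrict_of_ae_restrict_of_subset (Ioc_subset_Ioc_left hx.1.le) hae)]
  have hderiv := (hasDerivWithinAt_tail_integral hρ hR).const_sub lam
  rw [neg_neg] at hderiv
  exact hderiv.congr heq (heq R hR)

theorem exists_continuousOn_ae_eq_deriv (ha : Adm lam r r') {g : ℝ → ℝ → ℝ → ℝ}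
    (hg : ContinuousOnOctant g)
    (hmono : ∀ R x, 0 < R → 0 < x → StrictMonoOn (g R x) (Ioi 0))
    (hsurj : ∀ R x, 0 < R → 0 < x → SurjOn (g R x) (Ioi 0) univ)
    {y : ℝ → ℝ} (hy : ContinuousOn y (Ioc 0 1))
    (hae : ∀ᵐ R ∂volume.restrict (Ioc (0 : ℝ) 1), g R (r R) (r' R) = y R) :
    ∃ ρ : ℝ → ℝ, ContinuousOn ρ (Ioc 0 1) ∧ (∀ R ∈ Ioc (0 : ℝ) 1, 0 < ρ R) ∧
      (∀ R ∈ Ioc (0 : ℝ) 1, g R (r R) (ρ R) = y R) ∧ r' =ᵐ[volume.restrict (Ioc 0 1)] ρ := by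
  have hex : ∀ R, ∃ q, R ∈ Ioc (0 : ℝ) 1 → 0 < q ∧ g R (r R) q = y R := by
    intro R
    by_cases hR : R ∈ Ioc (0 : ℝ) 1
    · obtain ⟨q, hq, hqy⟩ := hsurj R (r R) hR.1 (ha.pos hR) (mem_univ (y R))
      exact ⟨q, fun _ => ⟨hq, hqy⟩⟩
    · exact ⟨0, fun h => absurd h hR⟩
  choose ρ hρ using hex
  refine ⟨ρ, ?_, fun R hR => (hρ R hR).1, fun R hR => (hρ R hR).2, ?_⟩
  · refine continuousOn_of_strictMonoOn_eq (g := fun R => g R (r R))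
      (fun R hR => hmono R (r R) hR.1 (ha.pos hR)) (fun q hq => ?_) hy
      (fun R hR => (hρ R hR).1) (fun R hR => (hρ R hR).2)
    exact hg.comp (fun R hR => hR.1) (ha.continuousOn.mono Ioc_subset_Icc_self)
      (fun R hR => ha.pos hR) continuousOn_const (fun _ _ => hq)
  · filter_upwards [hae, ha.ae_pos] with R hRy ⟨hR, hr, hr'⟩
    exact (hmono R (r R) hR.1 hr).injOn hr' (hρ R hR).1 (hRy.trans (hρ R hR).2.symm)

end Adm

/-- A Lagrangian `f(R, x, q)` of class `C¹` in `(x, q)` with partial derivatives `fx` and `fq`,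
everything being jointly continuous for positive `R`, `x` and `q`. -/
structure IsC1Lagrangian (f fx fq : ℝ → ℝ → ℝ → ℝ) : Prop where
  continuousOn : ContinuousOnOctant f
  continuousOn_dx : ContinuousOnOctant fx
  continuousOn_dq : ContinuousOnOctant fq
  hasFDerivAt : ∀ R x q : ℝ, 0 < R → 0 < x → 0 < q →
    HasFDerivAt (fun p : ℝ × ℝ => f R p.1 p.2)
      (fx R x q • ContinuousLinearMap.fst ℝ ℝ ℝ + fq R x q • ContinuousLinearMap.snd ℝ ℝ ℝ) (x, q)

/-- The curve `r` with derivative `r'` is admissible, has finite energy, and minimises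
`∫₀¹ f(R, s, s')` among the admissible curves of finite energy. -/
structure IsEnergyMinimizer (f : ℝ → ℝ → ℝ → ℝ) (lam : ℝ) (r r' : ℝ → ℝ) : Prop where
  adm : Adm lam r r'
  integrable : IntegrableOn (fun R => f R (r R) (r' R)) (Ioc 0 1)
  le : ∀ s s' : ℝ → ℝ, Adm lam s s' → IntegrableOn (fun R => f R (s R) (s' R)) (Ioc 0 1) →
    ∫ R in Ioc 0 1, f R (r R) (r' R) ≤ ∫ R in Ioc 0 1, f R (s R) (s' R)

/-- Along the curve `r` the logarithmic derivatives `x ∂ₓf` and `q ∂_q f` are dominated by one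
integrable function, uniformly under rescaling of `x` and `q` by factors close to `1`. This is what
justifies differentiating the energy along the variations `r' ↦ r'(1 + εψ)`. -/
def LogDominated (fx fq : ℝ → ℝ → ℝ → ℝ) (r r' : ℝ → ℝ) : Prop :=
  ∃ δ > 0, ∃ G : ℝ → ℝ, IntegrableOn G (Ioc 0 1) ∧
    ∀ᵐ R ∂volume.restrict (Ioc (0 : ℝ) 1), ∀ a b : ℝ, |a - 1| ≤ δ → |b - 1| ≤ δ →
      |r R * fx R (r R * b) (r' R * a)| ≤ G R ∧ |r' R * fq R (r R * b) (r' R * a)| ≤ G R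

theorem IsC1Lagrangian.hasDerivAt_variation {f fx fq : ℝ → ℝ → ℝ → ℝ}
    (hf : IsC1Lagrangian f fx fq) {R x q φ ψ ε : ℝ} (hR : 0 < R) (hx : 0 < x + ε * φ)
    (hq : 0 < q * (1 + ε * ψ)) :
    HasDerivAt (fun e => f R (x + e * φ) (q * (1 + e * ψ)))
      (fx R (x + ε * φ) (q * (1 + ε * ψ)) * φ + fq R (x + ε * φ) (q * (1 + ε * ψ)) * (q * ψ))
      ε := by
  have hx' : HasDerivAt (fun e => x + e * φ) φ ε := by
    simpa using ((hasDerivAt_id ε).mul_const φ).const_add x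
  have hq' : HasDerivAt (fun e => q * (1 + e * ψ)) (q * ψ) ε := by
    simpa using (((hasDerivAt_id ε).mul_const ψ).const_add 1).const_mul q
  refine HasDerivAt.congr_deriv (HasFDerivAt.comp_hasDerivAt
    (f := fun e => (x + e * φ, q * (1 + e * ψ))) ε (hf.hasFDerivAt R _ _ hR hx hq)
    (hx'.prodMk hq')) ?_
  simp

theorem abs_deriv_variation_le {fx fq : ℝ → ℝ → ℝ → ℝ}
    {R x q φ ψ ε δ C : ℝ} (hx : 0 < x) (hφ : |φ| ≤ x) (hψ : |ψ| ≤ 1) (hε : |ε| ≤ δ)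
    (hC : ∀ a b : ℝ, |a - 1| ≤ δ → |b - 1| ≤ δ →
      |x * fx R (x * b) (q * a)| ≤ C ∧ |q * fq R (x * b) (q * a)| ≤ C) :
    |fx R (x + ε * φ) (q * (1 + ε * ψ)) * φ + fq R (x + ε * φ) (q * (1 + ε * ψ)) * (q * ψ)| ≤
      C + C := by
  have hscale : ∀ χ : ℝ, |χ| ≤ 1 → |1 + ε * χ - 1| ≤ δ := by
    intro χ hχ
    rw [add_sub_cancel_left, abs_mul]
    exact (mul_le_of_le_one_right (abs_nonneg ε) hχ).trans hε
  have hχ : |φ / x| ≤ 1 := by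
    rw [abs_div, abs_of_pos hx]
    exact div_le_one_of_le₀ hφ hx.le
  have hxφ : x + ε * φ = x * (1 + ε * (φ / x)) := by field_simp
  obtain ⟨hCx, hCq⟩ := hC _ _ (hscale ψ hψ) (hscale _ hχ)
  rw [← hxφ] at hCx hCq
  refine (abs_add_le _ _).trans (add_le_add ?_ ?_)
  · calc |fx R (x + ε * φ) (q * (1 + ε * ψ)) * φ|
        = |x * fx R (x + ε * φ) (q * (1 + ε * ψ))| * |φ / x| := by
          rw [← abs_mul]; congr 1; field_simp
      _ ≤ C := (mul_le_of_le_one_right (abs_nonneg _) hχ).trans hCx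
  · calc |fq R (x + ε * φ) (q * (1 + ε * ψ)) * (q * ψ)|
        = |q * fq R (x + ε * φ) (q * (1 + ε * ψ))| * |ψ| := by
          rw [← abs_mul]; congr 1; ring
      _ ≤ C := (mul_le_of_le_one_right (abs_nonneg _) hψ).trans hCq

section EulerLagrange

variable {f fx fq : ℝ → ℝ → ℝ → ℝ} {lam : ℝ} {r r' : ℝ → ℝ}

theorem LogDominated.integrableOn_mul_dx (hdom : LogDominated fx fq r r') (ha : Adm lam r r')
    (hfx : ContinuousOnOctant fx) :
    IntegrableOn (fun R => r R * fx R (r R) (r' R)) (Ioc 0 1) := by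
  obtain ⟨δ, hδ, G, hG, hle⟩ := hdom
  refine Integrable.mono' hG
    (ha.aestronglyMeasurable.mul (ha.aestronglyMeasurable_comp hfx)) ?_
  filter_upwards [hle] with R hR
  simpa using (hR 1 1 (by simpa using hδ.le) (by simpa using hδ.le)).1

theorem LogDominated.integrableOn_mul_dq (hdom : LogDominated fx fq r r') (ha : Adm lam r r')
    (hfq : ContinuousOnOctant fq) :
    IntegrableOn (fun R => r' R * fq R (r R) (r' R)) (Ioc 0 1) := by
  obtain ⟨δ, hδ, G, hG, hle⟩ := hdom
  refine Integrable.mono' hG (ha.intg.1.mul (ha.aestronglyMeasurable_comp hfq)) ?_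
  filter_upwards [hle] with R hR
  simpa using (hR 1 1 (by simpa using hδ.le) (by simpa using hδ.le)).2

theorem LogDominated.integrableOn_dx (hdom : LogDominated fx fq r r') (ha : Adm lam r r')
    (hfx : ContinuousOnOctant fx) {c : ℝ} (hc : 0 < c) :
    IntegrableOn (fun R => fx R (r R) (r' R)) (Ioc c 1) := by
  have hpos : ∀ R ∈ Icc c 1, 0 < r R := fun R hR => ha.pos ⟨hc.trans_le hR.1, hR.2⟩
  have hinv : ContinuousOn (fun R => (r R)⁻¹) (Icc c 1) :=
    (ha.continuousOn.mono (Icc_subset_Icc_left hc.le)).inv₀ fun R hR => (hpos R hR).ne'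
  have hint : IntegrableOn (fun R => r R * fx R (r R) (r' R)) (Icc c 1) :=
    (integrableOn_Icc_iff_integrableOn_Ioc (by finiteness)).2
      ((hdom.integrableOn_mul_dx ha hfx).mono_set (Ioc_subset_Ioc_left hc.le))
  refine ((hint.continuousOn_mul hinv isCompact_Icc).mono_set Ioc_subset_Icc_self).congr_fun
    (fun R hR => ?_) measurableSet_Ioc
  exact inv_mul_cancel_left₀ (hpos R (Ioc_subset_Icc_self hR)).ne' _

theorem LogDominated.integrableOn_dx_mul_integral_abs (hdom : LogDominated fx fq r r')
    (ha : Adm lam r r') (hfx : ContinuousOnOctant fx) {ψ : ℝ → ℝ} (hψ : Measurable ψ)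
    (hψ1 : ∀ R, |ψ R| ≤ 1) :
    IntegrableOn (fun R => fx R (r R) (r' R) * ∫ t in Ioc 0 R, |r' t * ψ t|) (Ioc 0 1) := by
  refine Integrable.mono (hdom.integrableOn_mul_dx ha hfx)
    ((ha.aestronglyMeasurable_comp hfx).mul
      (aestronglyMeasurable_primitive_Ioc (ha.integrableOn_deriv_mul hψ hψ1).abs)) ?_
  filter_upwards [ha.ae_pos] with R ⟨hR, hr, _⟩
  rw [norm_mul, norm_mul, mul_comm ‖r R‖, Real.norm_of_nonneg hr.le,
    Real.norm_of_nonneg (integral_nonneg fun _ => abs_nonneg _)]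
  gcongr
  exact ha.integral_abs_deriv_mul_le hψ hψ1 (Ioc_subset_Icc_self hR)

theorem LogDominated.integrableOn_dx_mul_integral (hdom : LogDominated fx fq r r')
    (ha : Adm lam r r') (hfx : ContinuousOnOctant fx) {ψ : ℝ → ℝ} (hψ : Measurable ψ)
    (hψ1 : ∀ R, |ψ R| ≤ 1) :
    IntegrableOn (fun R => fx R (r R) (r' R) * ∫ t in Ioc 0 R, r' t * ψ t) (Ioc 0 1) := by
  refine Integrable.mono (hdom.integrableOn_dx_mul_integral_abs ha hfx hψ hψ1)
    ((ha.aestronglyMeasurable_comp hfx).mul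
      (aestronglyMeasurable_primitive_Ioc (ha.integrableOn_deriv_mul hψ hψ1)))
    (.of_forall fun R => ?_)
  rw [norm_mul, norm_mul, Real.norm_of_nonneg (integral_nonneg fun _ => abs_nonneg _)]
  gcongr
  exact abs_integral_le_integral_abs

theorem IsEnergyMinimizer.integral_variation_eq_zero (hm : IsEnergyMinimizer f lam r r')
    (hf : IsC1Lagrangian f fx fq) (hdom : LogDominated fx fq r r') {ψ : ℝ → ℝ}
    (hψ : Measurable ψ) (hψ1 : ∀ R, |ψ R| ≤ 1) (hψ0 : ∫ t in Ioc 0 1, r' t * ψ t = 0) :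
    ∫ R in Ioc 0 1, (fx R (r R) (r' R) * (∫ t in Ioc 0 R, r' t * ψ t) +
      fq R (r R) (r' R) * (r' R * ψ R)) = 0 := by
  have hint := (hdom.integrableOn_dx_mul_integral hm.adm hf.continuousOn_dx hψ hψ1).1.add
    ((hm.adm.aestronglyMeasurable_comp hf.continuousOn_dq).mul
      (hm.adm.integrableOn_deriv_mul hψ hψ1).1)
  obtain ⟨δ, hδ, G, hG, hle⟩ := hdom
  have ha := hm.adm
  set φ : ℝ → ℝ := fun R => ∫ t in Ioc 0 R, r' t * ψ t
  have hφr : ∀ R ∈ Ioc (0 : ℝ) 1, |φ R| ≤ r R := fun R hR =>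
    abs_integral_le_integral_abs.trans
      (ha.integral_abs_deriv_mul_le hψ hψ1 (Ioc_subset_Icc_self hR))
  have hsmall : ∀ ε ∈ Metric.ball (0 : ℝ) (min δ (1 / 2)), |ε| ≤ δ ∧ |ε| ≤ 1 / 2 := by
    intro ε hε
    rw [mem_ball_zero_iff, Real.norm_eq_abs, lt_min_iff] at hε
    exact ⟨hε.1.le, hε.2.le⟩
  have hvar : ∀ ε ∈ Metric.ball (0 : ℝ) (min δ (1 / 2)),
      Adm lam (fun R => r R + ε * φ R) (fun R => r' R * (1 + ε * ψ R)) :=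
    fun ε hε => ha.variation hψ hψ1 hψ0 (hsmall ε hε).2
  have hderiv_zero := integral_deriv_eq_zero_of_forall_integral_le
    (μ := volume.restrict (Ioc (0 : ℝ) 1)) (G := fun R => G R + G R)
    (F := fun ε R => f R (r R + ε * φ R) (r' R * (1 + ε * ψ R)))
    (F' := fun ε R => fx R (r R + ε * φ R) (r' R * (1 + ε * ψ R)) * φ R +
      fq R (r R + ε * φ R) (r' R * (1 + ε * ψ R)) * (r' R * ψ R))
    (lt_min hδ one_half_pos)
    (fun ε hε => (hvar ε hε).aestronglyMeasurable_comp hf.continuousOn)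
  simp only [zero_mul, add_zero, mul_one] at hderiv_zero
  refine hderiv_zero hint hm.integrable ?_ (hG.add hG) ?_ fun ε hε => hm.le _ _ (hvar ε hε)
  · filter_upwards [ha.ae_pos] with R ⟨hR, _, hr'⟩ ε hε
    exact hf.hasDerivAt_variation hR.1 ((hvar ε hε).pos hR)
      (mul_pos hr' (one_add_mul_pos (hsmall ε hε).2 (hψ1 R)))
  · filter_upwards [hle, ha.ae_pos] with R hRle ⟨hR, hr, _⟩ ε hε
    exact abs_deriv_variation_le hr (hφr R hR) (hψ1 R) (hsmall ε hε).1 hRle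

/-- Exchanging the order of integration turns the first variation into `∫ r' ψ (fq + ∫_R^1 fx)`,
so that the du Bois-Reymond argument applies with weight `r'`. -/
theorem IsEnergyMinimizer.exists_ae_dq_eq_sub_integral_dx (hm : IsEnergyMinimizer f lam r r')
    (hf : IsC1Lagrangian f fx fq) (hdom : LogDominated fx fq r r') :
    ∃ c, ∀ᵐ R ∂volume.restrict (Ioc (0 : ℝ) 1),
      fq R (r R) (r' R) = c - ∫ t in Ioc R 1, fx t (r t) (r' t) := by
  have ha := hm.adm
  set P : ℝ → ℝ := fun R => fq R (r R) (r' R)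
  set Q : ℝ → ℝ := fun R => fx R (r R) (r' R)
  have hexchange : ∀ ψ : ℝ → ℝ, Measurable ψ → (∀ R, |ψ R| ≤ 1) →
      IntegrableOn (fun t => r' t * ψ t * ∫ R in Ioc t 1, Q R) (Ioc 0 1) ∧
      ∫ R in Ioc 0 1, Q R * ∫ t in Ioc 0 R, r' t * ψ t =
        ∫ t in Ioc 0 1, r' t * ψ t * ∫ R in Ioc t 1, Q R := fun ψ hψ hψ1 =>
    integral_mul_primitive_eq_integral_mul_tail (ha.integrableOn_deriv_mul hψ hψ1)
      (ha.aestronglyMeasurable_comp hf.continuousOn_dx)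
      (hdom.integrableOn_dx_mul_integral_abs ha hf.continuousOn_dx hψ hψ1)
  have hrP : IntegrableOn (fun R => r' R * P R) (Ioc 0 1) :=
    hdom.integrableOn_mul_dq ha hf.continuousOn_dq
  have hrPT : IntegrableOn (fun R => r' R * (P R + ∫ t in Ioc R 1, Q t)) (Ioc 0 1) :=
    (hrP.add (hexchange 1 measurable_one (fun _ => by simp)).1).congr
      (.of_forall fun R => by simp [mul_add])
  suffices hconst : ∃ c, ∀ᵐ R ∂volume.restrict (Ioc (0 : ℝ) 1),
      P R + ∫ t in Ioc R 1, Q t = c from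
    hconst.imp fun c hc => hc.mono fun R hR => eq_sub_of_add_eq hR
  refine ae_eq_const_of_forall_integral_mul_eq_zero ha.intg ha.derivPos hrPT
    fun ψ hψ hψ1 hψ0 => ?_
  have hPψ : IntegrableOn (fun R => P R * (r' R * ψ R)) (Ioc 0 1) :=
    (hrP.mul_bdd (c := 1) hψ.aestronglyMeasurable (.of_forall hψ1)).congr
      (.of_forall fun R => by ring)
  calc ∫ R in Ioc 0 1, r' R * ψ R * (P R + ∫ t in Ioc R 1, Q t)
      = ∫ R in Ioc 0 1, (r' R * ψ R * (∫ t in Ioc R 1, Q t) + P R * (r' R * ψ R)) := by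
        congr 1 with R; ring
    _ = ∫ R in Ioc 0 1, (Q R * (∫ t in Ioc 0 R, r' t * ψ t) + P R * (r' R * ψ R)) := by
        rw [integral_add (hexchange ψ hψ hψ1).1 hPψ, ← (hexchange ψ hψ hψ1).2, integral_add
          (hdom.integrableOn_dx_mul_integral ha hf.continuousOn_dx hψ hψ1) hPψ]
    _ = 0 := hm.integral_variation_eq_zero hf hdom hψ hψ1 hψ0

theorem IsEnergyMinimizer.exists_euler_lagrange (hm : IsEnergyMinimizer f lam r r')
    (hf : IsC1Lagrangian f fx fq) (hdom : LogDominated fx fq r r')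
    (hmono : ∀ R x, 0 < R → 0 < x → StrictMonoOn (fq R x) (Ioi 0))
    (hsurj : ∀ R x, 0 < R → 0 < x → SurjOn (fq R x) (Ioi 0) univ) :
    ∃ ρ : ℝ → ℝ, ContinuousOn ρ (Ioc 0 1) ∧ (∀ R ∈ Ioc (0 : ℝ) 1, 0 < ρ R) ∧
      (∀ R ∈ Ioc (0 : ℝ) 1, HasDerivWithinAt r (ρ R) (Ioc 0 1) R) ∧
      ∀ R ∈ Ioc (0 : ℝ) 1, HasDerivWithinAt (fun s => fq s (r s) (ρ s))
        (fx R (r R) (ρ R)) (Ioc 0 1) R := by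
  have ha := hm.adm
  obtain ⟨c, hc⟩ := hm.exists_ae_dq_eq_sub_integral_dx hf hdom
  have htail : ContinuousOn (fun R => c - ∫ t in Ioc R 1, fx t (r t) (r' t)) (Ioc 0 1) :=
    continuousOn_const.sub (continuousOn_tail_integral fun _ h0 =>
      hdom.integrableOn_dx ha hf.continuousOn_dx h0)
  obtain ⟨ρ, hρ, hρ_pos, hρ_eq, hρ_ae⟩ :=
    ha.exists_continuousOn_ae_eq_deriv hf.continuousOn_dq hmono hsurj htail hc
  refine ⟨ρ, hρ, hρ_pos, fun R hR => ha.hasDerivWithinAt hρ hρ_ae hR, fun R hR => ?_⟩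
  have hfx : ContinuousOn (fun R => fx R (r R) (ρ R)) (Ioc 0 1) :=
    hf.continuousOn_dx.comp (fun R hR => hR.1) (ha.continuousOn.mono Ioc_subset_Icc_self)
      (fun R hR => ha.pos hR) hρ hρ_pos
  have heq : ∀ x ∈ Ioc (0 : ℝ) 1,
      fq x (r x) (ρ x) = c - ∫ t in Ioc x 1, fx t (r t) (ρ t) := by
    intro x hx
    rw [hρ_eq x hx]
    congr 1
    refine integral_congr_ae ?_
    filter_upwards [ae_restrict_of_ae_restrict_of_subset (Ioc_subset_Ioc_left hx.1.le) hρ_ae]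
      with t ht
    rw [ht]
  have hderiv := (hasDerivWithinAt_tail_integral hfx hR).const_sub c
  rw [neg_neg] at hderiv
  exact hderiv.congr heq (heq R hR)

end EulerLagrange

/-- The class of stored energies of the determinant `d = v₁⋯vₙ` for which the theorem holds:
nonnegative and `C¹` on `(0,∞)`, with a derivative `h'` strictly increasing from `−∞` to `∞`. -/
structure IsDetEnergy (h h' : ℝ → ℝ) : Prop where
  nonneg : ∀ d : ℝ, 0 < d → 0 ≤ h d
  hasDerivAt : ∀ d : ℝ, 0 < d → HasDerivAt h (h' d) d
  continuousOn_deriv : ContinuousOn h' (Ioi 0)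
  strictMonoOn_deriv : StrictMonoOn h' (Ioi 0)
  tendsto_deriv_zero : Tendsto h' (nhdsWithin 0 (Ioi 0)) atBot
  tendsto_deriv_atTop : Tendsto h' atTop atTop

theorem GoodH.isDetEnergy {h h' h'' : ℝ → ℝ} (hh : GoodH h h' h'') : IsDetEnergy h h' where
  nonneg := hh.nonneg
  hasDerivAt := hh.deriv1
  continuousOn_deriv d hd := (hh.deriv2 d hd).continuousAt.continuousWithinAt
  strictMonoOn_deriv := by
    refine strictMonoOn_of_deriv_pos (convex_Ioi 0)
      (fun d hd => (hh.deriv2 d hd).continuousAt.continuousWithinAt) fun d hd => ?_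
    rw [interior_Ioi] at hd
    rw [(hh.deriv2 d hd).deriv]
    exact hh.hpp_pos d hd
  tendsto_deriv_zero := hh.dlim_zero
  tendsto_deriv_atTop := hh.dlim_top

/-- The coefficient `(n−1)/n + ln(v^{n−1})` of `κ d` in the modified stored energy `Φ̂`. -/
def logCoeff (n : ℕ) (v : ℝ) : ℝ := ((n : ℝ) - 1) / n + ((n : ℝ) - 1) * Real.log v

/-- The integrand `f(R, x, q) = R^{n−1} Φ̂(q, x/R, …, x/R)` of the modified energy `Î`. -/
def energyDensity (n : ℕ) (κ : ℝ) (h : ℝ → ℝ) (R x q : ℝ) : ℝ :=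
  R ^ (n - 1) * PhiHat n κ h q (x / R)

/-- The derivative `∂f/∂q = R^{n−1} Φ̂_{,1}` of the energy density. -/
def energyDensityDq (n : ℕ) (κ : ℝ) (h' : ℝ → ℝ) (R x q : ℝ) : ℝ :=
  R ^ (n - 1) * PhiHat1 n κ h' q (x / R)

/-- The derivative `∂f/∂x = (n−1) R^{n−2} Φ̂_{,2}` of the energy density; the factor `n − 1` comes
from the `n − 1` equal arguments `x/R` of `Φ̂`. -/
def energyDensityDx (n : ℕ) (κ : ℝ) (h' : ℝ → ℝ) (R x q : ℝ) : ℝ :=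
  ((n : ℝ) - 1) * R ^ (n - 2) * PhiHat2 n κ h' q (x / R)

section Lagrangian

variable {n : ℕ} {κ : ℝ} {h h' : ℝ → ℝ}

theorem continuousOnOctant_div : ContinuousOnOctant fun R x _ => x / R :=
  ContinuousOn.div (by fun_prop) (by fun_prop) fun _ hp => ne_of_gt hp.1

theorem ContinuousOnOctant.comp_continuousOn_Ioi {g : ℝ → ℝ → ℝ → ℝ} (hg : ContinuousOnOctant g)
    (hpos : ∀ R x q, 0 < R → 0 < x → 0 < q → 0 < g R x q) {k : ℝ → ℝ}
    (hk : ContinuousOn k (Ioi 0)) : ContinuousOnOctant fun R x q => k (g R x q) :=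
  ContinuousOn.comp hk hg fun _ hp => hpos _ _ _ hp.1 hp.2.1 hp.2.2

theorem continuousOnOctant_log_div : ContinuousOnOctant fun R x _ => Real.log (x / R) :=
  continuousOnOctant_div.comp_continuousOn_Ioi (fun _ _ _ hR hx _ => div_pos hx hR)
    (Real.continuousOn_log.mono fun _ hd => ne_of_gt hd)

theorem continuousOnOctant_det {k : ℝ → ℝ} (hk : ContinuousOn k (Ioi 0)) (m : ℕ) :
    ContinuousOnOctant fun R x q => k (q * (x / R) ^ m) := by
  refine ContinuousOnOctant.comp_continuousOn_Ioi (g := fun R x q => q * (x / R) ^ m) ?_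
    (fun _ _ _ hR hx hq => by positivity) hk
  exact ContinuousOn.mul (by fun_prop) (ContinuousOn.pow continuousOnOctant_div m)

theorem continuousOnOctant_energyDensity (hh : ContinuousOn h (Ioi 0)) :
    ContinuousOnOctant (energyDensity n κ h) :=
  (continuousOn_fst.pow (n - 1)).mul
    (((continuousOn_const.mul (continuousOn_snd.snd.pow n)).add
      (continuousOnOctant_det hh (n - 1))).add
    ((continuousOn_const.mul (continuousOn_snd.snd.mul (continuousOnOctant_div.pow (n - 1)))).mul
      (continuousOn_const.add (continuousOn_const.mul continuousOnOctant_log_div))))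

theorem continuousOnOctant_energyDensityDq (hh' : ContinuousOn h' (Ioi 0)) :
    ContinuousOnOctant (energyDensityDq n κ h') :=
  (continuousOn_fst.pow (n - 1)).mul
    (((continuousOn_const.mul (continuousOn_snd.snd.pow (n - 1))).add
      ((continuousOnOctant_div.pow (n - 1)).mul (continuousOnOctant_det hh' (n - 1)))).add
    ((continuousOn_const.mul (continuousOnOctant_div.pow (n - 1))).mul
      (continuousOn_const.add (continuousOn_const.mul continuousOnOctant_log_div))))

theorem continuousOnOctant_energyDensityDx (hh' : ContinuousOn h' (Ioi 0)) :
    ContinuousOnOctant (energyDensityDx n κ h') :=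
  (continuousOn_const.mul (continuousOn_fst.pow (n - 2))).mul
    ((continuousOn_snd.snd.mul (continuousOnOctant_div.pow (n - 2))).mul
      (((continuousOnOctant_det hh' (n - 1)).add continuousOn_const).add
      (continuousOn_const.mul
        (continuousOn_const.mul (continuousOn_const.add continuousOnOctant_log_div)))))

theorem hasFDerivAt_energyDensity (hn : 2 ≤ n) (hh : ∀ d : ℝ, 0 < d → HasDerivAt h (h' d) d)
    {R x q : ℝ} (hR : 0 < R) (hx : 0 < x) (hq : 0 < q) :
    HasFDerivAt (fun p : ℝ × ℝ => energyDensity n κ h R p.1 p.2)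
      (energyDensityDx n κ h' R x q • ContinuousLinearMap.fst ℝ ℝ ℝ +
        energyDensityDq n κ h' R x q • ContinuousLinearMap.snd ℝ ℝ ℝ) (x, q) := by
  obtain ⟨m, rfl⟩ := Nat.exists_eq_add_of_le' hn
  obtain ⟨v, hv0, rfl⟩ : ∃ v, 0 < v ∧ v * R = x :=
    ⟨x / R, div_pos hx hR, div_mul_cancel₀ x hR.ne'⟩
  have hv : HasFDerivAt (fun p : ℝ × ℝ => p.1 / R) (R⁻¹ • ContinuousLinearMap.fst ℝ ℝ ℝ)
      (v * R, q) := by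
    simpa only [div_eq_mul_inv] using hasFDerivAt_fst.mul_const R⁻¹
  have hq' : HasFDerivAt (fun p : ℝ × ℝ => p.2) (ContinuousLinearMap.snd ℝ ℝ ℝ)
      (v * R, q) := hasFDerivAt_snd
  have hd := hq'.mul (hv.pow (m + 1))
  have hhd := (hh (q * (v * R / R) ^ (m + 1)) (by positivity)).comp_hasFDerivAt (v * R, q) hd
  have hlog := ((hv.log (div_pos hx hR).ne').const_mul (((m + 2 : ℕ) : ℝ) - 1)).const_add
    ((((m + 2 : ℕ) : ℝ) - 1) / (m + 2 : ℕ))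
  refine (((((hq'.pow (m + 2)).const_mul (κ / (m + 2 : ℕ))).add hhd).add
    ((hd.const_mul κ).mul hlog)).const_mul (R ^ (m + 1))).congr_fderiv ?_
  ext
  · simp only [energyDensityDx, PhiHat2, Nat.add_one_sub_one, add_tsub_cancel_right, Nat.cast_add,
      Nat.cast_ofNat, Nat.cast_one, nsmul_eq_mul, mul_div_cancel_right₀ _ hR.ne', Pi.mul_apply,
      ContinuousLinearMap.add_comp, ContinuousLinearMap.smul_comp,
      ContinuousLinearMap.fst_comp_inl, ContinuousLinearMap.snd_comp_inl, smul_zero, smul_add,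
      add_zero, zero_add, add_apply, smul_apply, ContinuousLinearMap.id_apply, smul_eq_mul, mul_one]
    field_simp
    ring
  · simp only [energyDensityDq, PhiHat1, Nat.add_one_sub_one, add_tsub_cancel_right, Nat.cast_add,
      Nat.cast_ofNat, Nat.cast_one, nsmul_eq_mul, mul_div_cancel_right₀ _ hR.ne', Pi.mul_apply,
      ContinuousLinearMap.add_comp, ContinuousLinearMap.smul_comp,
      ContinuousLinearMap.fst_comp_inr, ContinuousLinearMap.snd_comp_inr, smul_zero, smul_add,
      zero_add, add_apply, smul_apply, ContinuousLinearMap.id_apply, smul_eq_mul, mul_one]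
    field_simp

theorem IsDetEnergy.isC1Lagrangian (hh : IsDetEnergy h h') (hn : 2 ≤ n) :
    IsC1Lagrangian (energyDensity n κ h) (energyDensityDx n κ h') (energyDensityDq n κ h') where
  continuousOn := continuousOnOctant_energyDensity
    fun d hd => (hh.hasDerivAt d hd).continuousAt.continuousWithinAt
  continuousOn_dx := continuousOnOctant_energyDensityDx hh.continuousOn_deriv
  continuousOn_dq := continuousOnOctant_energyDensityDq hh.continuousOn_deriv
  hasFDerivAt _ _ _ := hasFDerivAt_energyDensity hn hh.hasDerivAt

theorem IsDetEnergy.strictMonoOn_energyDensityDq (hh : IsDetEnergy h h') (hκ : 0 ≤ κ) {R x : ℝ}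
    (hR : 0 < R) (hx : 0 < x) : StrictMonoOn (energyDensityDq n κ h' R x) (Ioi 0) := by
  intro q₁ (hq₁ : 0 < q₁) q₂ (hq₂ : 0 < q₂) hlt
  have hv : 0 < (x / R) ^ (n - 1) := by positivity
  have hh' : h' (q₁ * (x / R) ^ (n - 1)) < h' (q₂ * (x / R) ^ (n - 1)) :=
    hh.strictMonoOn_deriv (mul_pos hq₁ hv) (mul_pos hq₂ hv) (by gcongr)
  have hpow : κ * q₁ ^ (n - 1) ≤ κ * q₂ ^ (n - 1) := by gcongr
  unfold energyDensityDq PhiHat1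
  gcongr ?_ * (?_ + _)
  exact add_lt_add_of_le_of_lt hpow (by gcongr)

theorem IsDetEnergy.tendsto_energyDensityDq_zero (hh : IsDetEnergy h h') {R x : ℝ}
    (hR : 0 < R) (hx : 0 < x) :
    Tendsto (energyDensityDq n κ h' R x) (nhdsWithin 0 (Ioi 0)) atBot := by
  have hv : 0 < (x / R) ^ (n - 1) := by positivity
  have hdet : Tendsto (fun q => q * (x / R) ^ (n - 1)) (nhdsWithin 0 (Ioi 0))
      (nhdsWithin 0 (Ioi 0)) := by
    refine tendsto_nhdsWithin_iff.2 ⟨?_, ?_⟩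
    · have hcont : Continuous fun q : ℝ => q * (x / R) ^ (n - 1) := by fun_prop
      exact (hcont.tendsto' 0 0 (zero_mul _)).mono_left nhdsWithin_le_nhds
    · filter_upwards [self_mem_nhdsWithin] with q hq using mul_pos hq hv
  have hpow : Continuous fun q : ℝ => κ * q ^ (n - 1) := by fun_prop
  refine Tendsto.const_mul_atBot (pow_pos hR _) (tendsto_atBot_add_const_right _ _ ?_)
  exact (hpow.tendsto 0).mono_left nhdsWithin_le_nhds |>.add_atBot
    ((hh.tendsto_deriv_zero.comp hdet).const_mul_atBot hv)

theorem IsDetEnergy.tendsto_energyDensityDq_atTop (hh : IsDetEnergy h h') (hκ : 0 ≤ κ) {R x : ℝ}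
    (hR : 0 < R) (hx : 0 < x) : Tendsto (energyDensityDq n κ h' R x) atTop atTop := by
  have hv : 0 < (x / R) ^ (n - 1) := by positivity
  have hpow : ∀ᶠ q : ℝ in atTop, 0 ≤ κ * q ^ (n - 1) := by
    filter_upwards [eventually_ge_atTop 0] with q hq using by positivity
  refine Tendsto.const_mul_atTop (pow_pos hR _) (tendsto_atTop_add_const_right _ _ ?_)
  exact Tendsto.zero_eventuallyLE_add_atTop hpow
    ((hh.tendsto_deriv_atTop.comp (tendsto_id.atTop_mul_const hv)).const_mul_atTop hv)

theorem IsDetEnergy.surjOn_energyDensityDq (hh : IsDetEnergy h h') (hκ : 0 ≤ κ) {R x : ℝ}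
    (hR : 0 < R) (hx : 0 < x) : SurjOn (energyDensityDq n κ h' R x) (Ioi 0) univ := by
  have hcont : ContinuousOn (energyDensityDq n κ h' R x) (Ioi 0) :=
    ContinuousOn.comp (continuousOnOctant_energyDensityDq hh.continuousOn_deriv)
      (f := fun q => (R, x, q)) (by fun_prop) fun q hq => ⟨hR, hx, hq⟩
  exact hcont.surjOn_of_tendsto nonempty_Ioi
    ((tendsto_comp_coe_Ioi_atBot).2 (hh.tendsto_energyDensityDq_zero hR hx))
    (tendsto_comp_val_Ioi_atTop.2 (hh.tendsto_energyDensityDq_atTop hκ hR hx))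

end Lagrangian

section Growth

variable {n : ℕ} {κ lam : ℝ} {h h' : ℝ → ℝ} {R x q : ℝ}

theorem energyDensity_eq (hR : 0 < R) : energyDensity n κ h R x q =
    κ / n * (R ^ (n - 1) * q ^ n) + R ^ (n - 1) * h (q * (x / R) ^ (n - 1)) +
      κ * (q * x ^ (n - 1) * logCoeff n (x / R)) := by
  have hxR : R ^ (n - 1) * (x / R) ^ (n - 1) = x ^ (n - 1) := by
    rw [← mul_pow, mul_div_cancel₀ _ hR.ne']
  unfold energyDensity PhiHat logCoeff
  rw [← hxR]
  ring

theorem neg_le_mul_logCoeff (hn : 2 ≤ n) (hR : R ∈ Ioc (0 : ℝ) 1) (hx : 0 < x) (hxl : x ≤ lam)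
    (hq : 0 < q) :
    -(((n : ℝ) - 1) * lam ^ (n - 2) * q) ≤ q * x ^ (n - 1) * logCoeff n (x / R) := by
  obtain ⟨m, rfl⟩ := Nat.exists_eq_add_of_le' hn
  have hlog : -x⁻¹ ≤ Real.log (x / R) := by
    have hxR : Real.log x ≤ Real.log (x / R) :=
      Real.log_le_log hx (le_div_self hx.le hR.1 hR.2)
    linarith [Real.one_sub_inv_le_log_of_pos hx]
  have hn1 : (0 : ℝ) ≤ (m + 2 : ℕ) - 1 := by push_cast; linarith [m.cast_nonneg (α := ℝ)]
  have hcoeff : ((m + 2 : ℕ) - 1) * -x⁻¹ ≤ logCoeff (m + 2) (x / R) :=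
    le_add_of_nonneg_of_le (by positivity) (mul_le_mul_of_nonneg_left hlog hn1)
  calc -(((m + 2 : ℕ) - 1) * lam ^ m * q) ≤ -(((m + 2 : ℕ) - 1) * x ^ m * q) := by gcongr
    _ = q * x ^ (m + 1) * (((m + 2 : ℕ) - 1) * -x⁻¹) := by field_simp; ring
    _ ≤ q * x ^ (m + 1) * logCoeff (m + 2) (x / R) := by gcongr

/-- The multiple `κ (n−1) λ^{n−2} r'` of `r'` bounding the negative part of the energy density. -/
def negPartBound (n : ℕ) (κ lam q : ℝ) : ℝ := κ * (((n : ℝ) - 1) * lam ^ (n - 2) * q)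

theorem mul_abs_logCoeff_le (hn : 2 ≤ n) (hκ : 0 ≤ κ) (hR : R ∈ Ioc (0 : ℝ) 1) (hx : 0 < x)
    (hxl : x ≤ lam) (hq : 0 < q) :
    κ * (q * x ^ (n - 1) * |logCoeff n (x / R)|) ≤
      κ * (q * x ^ (n - 1) * logCoeff n (x / R)) + 2 * negPartBound n κ lam q := by
  have hneg := mul_le_mul_of_nonneg_left (neg_le_mul_logCoeff hn hR hx hxl hq) hκ
  have hn1 : (0 : ℝ) ≤ n - 1 := by
    linarith [show (2 : ℝ) ≤ n by exact_mod_cast hn]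
  have hbound : 0 ≤ negPartBound n κ lam q :=
    mul_nonneg hκ (mul_nonneg (mul_nonneg hn1 (pow_nonneg (hx.le.trans hxl) _)) hq.le)
  rw [negPartBound] at *
  rcases abs_cases (logCoeff n (x / R)) with ⟨habs, -⟩ | ⟨habs, -⟩ <;> rw [habs] <;> linarith

theorem neg_energyDensity_le (hn : 2 ≤ n) (hκ : 0 ≤ κ) (hh : ∀ d : ℝ, 0 < d → 0 ≤ h d)
    (hR : R ∈ Ioc (0 : ℝ) 1) (hx : 0 < x) (hxl : x ≤ lam) (hq : 0 < q) :
    -energyDensity n κ h R x q ≤ negPartBound n κ lam q := by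
  have hR0 := hR.1
  have hlog := mul_le_mul_of_nonneg_left (neg_le_mul_logCoeff hn hR hx hxl hq) hκ
  have hpow : 0 ≤ κ / n * (R ^ (n - 1) * q ^ n) := by positivity
  have hdet : 0 ≤ R ^ (n - 1) * h (q * (x / R) ^ (n - 1)) :=
    mul_nonneg (by positivity) (hh _ (by positivity))
  rw [energyDensity_eq hR0, negPartBound]
  linarith

/-- Common bound for the logarithmic derivatives `x ∂ₓf` and `q ∂_q f` of the energy density near
`(x, q)`. The factor `2ⁿ` absorbs the rescalings of `x` and `q` by factors in `[1/2, 3/2]`. -/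
def logDerivBound (n : ℕ) (κ K : ℝ) (h : ℝ → ℝ) (R x q : ℝ) : ℝ :=
  n * 2 ^ n * (κ * (R ^ (n - 1) * q ^ n) +
    R ^ (n - 1) * (K * (h (q * (x / R) ^ (n - 1)) + 1)) +
    κ * (q * x ^ (n - 1) * (|logCoeff n (x / R)| + n)))

theorem logDerivBound_le (hn : 2 ≤ n) (hκ : 0 ≤ κ) {K : ℝ} (hK : 0 ≤ K)
    (hh : ∀ d : ℝ, 0 < d → 0 ≤ h d) (hR : R ∈ Ioc (0 : ℝ) 1) (hx : 0 < x) (hxl : x ≤ lam)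
    (hq : 0 < q) :
    logDerivBound n κ K h R x q ≤ n * 2 ^ n *
      ((n + K + 1) * (energyDensity n κ h R x q + 2 * negPartBound n κ lam q) + K +
        κ * (lam ^ (n - 1) * n) * q) := by
  have hR0 := hR.1
  have hpow : 0 ≤ κ / n * (R ^ (n - 1) * q ^ n) := by positivity
  have hdet : 0 ≤ R ^ (n - 1) * h (q * (x / R) ^ (n - 1)) :=
    mul_nonneg (by positivity) (hh _ (by positivity))
  have hlog := mul_abs_logCoeff_le hn hκ hR hx hxl hq
  set E := energyDensity n κ h R x q + 2 * negPartBound n κ lam q with hE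
  have hsum : κ / n * (R ^ (n - 1) * q ^ n) + R ^ (n - 1) * h (q * (x / R) ^ (n - 1)) +
      κ * (q * x ^ (n - 1) * |logCoeff n (x / R)|) ≤ E := by
    rw [hE, energyDensity_eq hR0]
    linarith
  have habs : 0 ≤ κ * (q * x ^ (n - 1) * |logCoeff n (x / R)|) := by positivity
  have hdiv : κ * (R ^ (n - 1) * q ^ n) = n * (κ / n * (R ^ (n - 1) * q ^ n)) := by
    field_simp
  have hRK : R ^ (n - 1) * K ≤ K := mul_le_of_le_one_left hK (pow_le_one₀ hR0.le hR.2)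
  have hxlam : κ * (q * x ^ (n - 1) * n) ≤ κ * (lam ^ (n - 1) * n) * q := by
    rw [mul_comm q, mul_right_comm, ← mul_assoc]
    gcongr
  unfold logDerivBound
  refine mul_le_mul_of_nonneg_left ?_ (by positivity)
  calc κ * (R ^ (n - 1) * q ^ n) + R ^ (n - 1) * (K * (h (q * (x / R) ^ (n - 1)) + 1)) +
        κ * (q * x ^ (n - 1) * (|logCoeff n (x / R)| + n))
      = n * (κ / n * (R ^ (n - 1) * q ^ n)) + K * (R ^ (n - 1) * h (q * (x / R) ^ (n - 1))) +
        κ * (q * x ^ (n - 1) * |logCoeff n (x / R)|) + R ^ (n - 1) * K +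
        κ * (q * x ^ (n - 1) * n) := by rw [hdiv]; ring
    _ ≤ n * E + K * E + E + K + κ * (lam ^ (n - 1) * n) * q := by
        gcongr <;> linarith
    _ = (n + K + 1) * E + K + κ * (lam ^ (n - 1) * n) * q := by ring

end Growth

section Scaling

variable {n : ℕ} {κ : ℝ} {h h' : ℝ → ℝ} {R x q a b : ℝ}

theorem mul_energyDensityDq_mul (hn : 2 ≤ n) (hR : 0 < R) (hx : 0 < x) (hb : 0 < b) :
    q * energyDensityDq n κ h' R (x * b) (q * a) =
      a ^ (n - 1) * (κ * (R ^ (n - 1) * q ^ n)) +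
      b ^ (n - 1) * (R ^ (n - 1) *
        (q * (x / R) ^ (n - 1) * h' (a * b ^ (n - 1) * (q * (x / R) ^ (n - 1))))) +
      b ^ (n - 1) *
        (κ * (q * x ^ (n - 1) * (logCoeff n (x / R) + ((n : ℝ) - 1) * Real.log b))) := by
  obtain ⟨m, rfl⟩ := Nat.exists_eq_add_of_le' hn
  obtain ⟨v, hv, rfl⟩ : ∃ v, 0 < v ∧ v * R = x :=
    ⟨x / R, div_pos hx hR, div_mul_cancel₀ x hR.ne'⟩
  have hvb : v * R * b / R = v * b := by field_simp
  have hdet : q * a * (v * b) ^ (m + 1) = a * b ^ (m + 1) * (q * v ^ (m + 1)) := by ring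
  simp only [energyDensityDq, PhiHat1, logCoeff, show m + 2 - 1 = m + 1 from rfl,
    mul_div_cancel_right₀ v hR.ne', hvb, hdet, Real.log_mul hv.ne' hb.ne']
  ring

theorem mul_energyDensityDx_mul (hn : 2 ≤ n) (hR : 0 < R) (hx : 0 < x) (hb : 0 < b) :
    x * energyDensityDx n κ h' R (x * b) (q * a) =
      ((n : ℝ) - 1) * (a * b ^ (n - 2)) * (R ^ (n - 1) *
        (q * (x / R) ^ (n - 1) * h' (a * b ^ (n - 1) * (q * (x / R) ^ (n - 1)))) +
        κ * (q * x ^ (n - 1) * (1 + (logCoeff n (x / R) + ((n : ℝ) - 1) * Real.log b)))) := by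
  obtain ⟨m, rfl⟩ := Nat.exists_eq_add_of_le' hn
  obtain ⟨v, hv, rfl⟩ : ∃ v, 0 < v ∧ v * R = x :=
    ⟨x / R, div_pos hx hR, div_mul_cancel₀ x hR.ne'⟩
  have hvb : v * R * b / R = v * b := by field_simp
  have hdet : q * a * (v * b) ^ (m + 1) = a * b ^ (m + 1) * (q * v ^ (m + 1)) := by ring
  simp only [energyDensityDx, PhiHat2, logCoeff, show m + 2 - 1 = m + 1 from rfl,
    show m + 2 - 2 = m from rfl, mul_div_cancel_right₀ v hR.ne', hvb, hdet,
    Real.log_mul hv.ne' hb.ne']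
  push_cast
  field_simp
  ring

theorem pow_le_two_pow {k : ℕ} (ha : |a - 1| ≤ 1 / 2) (hk : k ≤ n) : a ^ k ≤ 2 ^ n := by
  rw [abs_le] at ha
  calc a ^ k ≤ 2 ^ k := pow_le_pow_left₀ (by linarith) (by linarith) k
    _ ≤ 2 ^ n := pow_le_pow_right₀ one_le_two hk

theorem abs_log_le_one (hb : |b - 1| ≤ 1 / 2) : |Real.log b| ≤ 1 := by
  rw [abs_le] at hb
  have hb0 : 0 < b := by linarith
  have hinv : b⁻¹ ≤ 2 := inv_le_of_inv_le₀ two_pos (by linarith)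
  rw [abs_le]
  constructor <;> linarith [Real.log_le_sub_one_of_pos hb0, Real.one_sub_inv_le_log_of_pos hb0]

theorem abs_add_mul_log_le (hn : 2 ≤ n) (hb : |b - 1| ≤ 1 / 2) (ℓ : ℝ) :
    |ℓ + ((n : ℝ) - 1) * Real.log b| ≤ |ℓ| + (n - 1) := by
  have hn1 : (0 : ℝ) ≤ n - 1 := by
    linarith [show (2 : ℝ) ≤ n by exact_mod_cast hn]
  refine (abs_add_le _ _).trans (add_le_add_right ?_ _)
  rw [abs_mul, abs_of_nonneg hn1]
  exact mul_le_of_le_one_right hn1 (abs_log_le_one hb)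

theorem abs_mul_energyDensityDq_le (hn : 2 ≤ n) (hκ : 0 ≤ κ) (hR : 0 < R) (hx : 0 < x)
    (hq : 0 < q) {K : ℝ} (ha : |a - 1| ≤ 1 / 2) (hb : |b - 1| ≤ 1 / 2)
    (hctrl : |q * (x / R) ^ (n - 1) * h' (a * b ^ (n - 1) * (q * (x / R) ^ (n - 1)))| ≤
      K * (h (q * (x / R) ^ (n - 1)) + 1)) :
    |q * energyDensityDq n κ h' R (x * b) (q * a)| ≤ logDerivBound n κ K h R x q := by
  have ha0 : 0 < a := by linarith [(abs_le.1 ha).1]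
  have hb0 : 0 < b := by linarith [(abs_le.1 hb).1]
  have hn1 : (1 : ℝ) ≤ n := by exact_mod_cast one_le_two.trans hn
  have hlog := abs_add_mul_log_le hn hb (logCoeff n (x / R))
  have hpa : a ^ (n - 1) ≤ n * 2 ^ n :=
    (pow_le_two_pow ha (n.sub_le 1)).trans (le_mul_of_one_le_left (by positivity) hn1)
  have hpb : b ^ (n - 1) ≤ n * 2 ^ n :=
    (pow_le_two_pow hb (n.sub_le 1)).trans (le_mul_of_one_le_left (by positivity) hn1)
  rw [mul_energyDensityDq_mul hn hR hx hb0, logDerivBound, mul_add ((n : ℝ) * 2 ^ n),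
    mul_add ((n : ℝ) * 2 ^ n)]
  refine (abs_add_three _ _ _).trans (add_le_add_three ?_ ?_ ?_)
  · rw [abs_of_nonneg (by positivity)]
    gcongr
  · rw [abs_mul, abs_mul, abs_of_pos (pow_pos hb0 _), abs_of_pos (pow_pos hR _)]
    gcongr
  · rw [abs_mul, abs_mul, abs_mul, abs_of_pos (pow_pos hb0 _), abs_of_nonneg hκ,
      abs_of_pos (by positivity : 0 < q * x ^ (n - 1))]
    gcongr
    linarith

theorem abs_mul_energyDensityDx_le (hn : 2 ≤ n) (hκ : 0 ≤ κ) (hR : 0 < R) (hx : 0 < x)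
    (hq : 0 < q) {K : ℝ} (ha : |a - 1| ≤ 1 / 2) (hb : |b - 1| ≤ 1 / 2)
    (hctrl : |q * (x / R) ^ (n - 1) * h' (a * b ^ (n - 1) * (q * (x / R) ^ (n - 1)))| ≤
      K * (h (q * (x / R) ^ (n - 1)) + 1)) :
    |x * energyDensityDx n κ h' R (x * b) (q * a)| ≤ logDerivBound n κ K h R x q := by
  have ha0 : 0 < a := by linarith [(abs_le.1 ha).1]
  have hb0 : 0 < b := by linarith [(abs_le.1 hb).1]
  have hn1 : (0 : ℝ) ≤ n - 1 := by
    linarith [show (2 : ℝ) ≤ n by exact_mod_cast hn]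
  have hlog : |1 + (logCoeff n (x / R) + ((n : ℝ) - 1) * Real.log b)| ≤
      |logCoeff n (x / R)| + n := by
    have := abs_add_mul_log_le hn hb (logCoeff n (x / R))
    have := abs_add_le 1 (logCoeff n (x / R) + ((n : ℝ) - 1) * Real.log b)
    rw [abs_one] at this
    linarith
  have hscale : a * b ^ (n - 2) ≤ 2 ^ n := by
    obtain ⟨m, rfl⟩ := Nat.exists_eq_add_of_le' hn
    calc a * b ^ m ≤ 2 ^ 1 * 2 ^ (m + 1) := by
          gcongr
          · simpa using pow_le_two_pow ha (le_refl 1)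
          · exact pow_le_two_pow hb (m.le_add_right 1)
      _ = 2 ^ (m + 2) := by ring
  rw [mul_energyDensityDx_mul hn hR hx hb0, logDerivBound, abs_mul,
    abs_of_nonneg (by positivity : (0 : ℝ) ≤ (n - 1) * (a * b ^ (n - 2)))]
  have hfactor : ((n : ℝ) - 1) * (a * b ^ (n - 2)) ≤ n * 2 ^ n := by
    gcongr
    linarith
  have hpow : 0 ≤ κ * (R ^ (n - 1) * q ^ n) := by positivity
  gcongr
  rw [add_assoc]
  refine (abs_add_le _ _).trans ((add_le_add ?_ ?_).trans (le_add_of_nonneg_left hpow))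
  · rw [abs_mul, abs_of_pos (pow_pos hR _)]
    gcongr
  · rw [abs_mul, abs_mul, abs_of_nonneg hκ, abs_of_pos (by positivity : 0 < q * x ^ (n - 1))]
    gcongr

theorem exists_abs_mul_pow_sub_one_le {γ : ℝ} (hγ : 0 < γ) (m : ℕ) :
    ∃ δ > 0, δ ≤ 1 / 2 ∧ ∀ a b : ℝ, |a - 1| ≤ δ → |b - 1| ≤ δ → |a * b ^ m - 1| ≤ γ := by
  have hcont : Continuous fun p : ℝ × ℝ => p.1 * p.2 ^ m := by fun_prop
  obtain ⟨δ, hδ, hball⟩ := Metric.nhds_basis_closedBall.mem_iff.1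
    ((hcont.tendsto' (1, 1) 1 (by simp)).eventually (Metric.closedBall_mem_nhds 1 hγ))
  refine ⟨min δ (1 / 2), lt_min hδ one_half_pos, min_le_right _ _, fun a b ha hb => ?_⟩
  have hmem : (a, b) ∈ Metric.closedBall ((1, 1) : ℝ × ℝ) δ :=
    max_le (ha.trans (min_le_left _ _)) (hb.trans (min_le_left _ _))
  exact hball hmem

end Scaling

section Minimizer

variable {n : ℕ} {κ lam : ℝ} {h h' : ℝ → ℝ} {r r' : ℝ → ℝ}

theorem logDominated_energyDensity (hn : 2 ≤ n) (hκ : 0 ≤ κ) (hh : ∀ d : ℝ, 0 < d → 0 ≤ h d)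
    {K γ : ℝ} (hγ : 0 < γ)
    (hctrl : ∀ d : ℝ, 0 < d → ∀ c : ℝ, |c - 1| ≤ γ → |d * h' (c * d)| ≤ K * (h d + 1))
    (ha : Adm lam r r')
    (hint : IntegrableOn (fun R => energyDensity n κ h R (r R) (r' R)) (Ioc 0 1)) :
    LogDominated (energyDensityDx n κ h') (energyDensityDq n κ h') r r' := by
  have hK : 0 ≤ K := nonneg_of_mul_nonneg_left
    ((abs_nonneg _).trans (hctrl 1 one_pos 1 (by simpa using hγ.le)))
    (by linarith [hh 1 one_pos])
  obtain ⟨δ, hδ, hδ_half, hscale⟩ := exists_abs_mul_pow_sub_one_le hγ (n - 1)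
  refine ⟨δ, hδ, fun R => n * 2 ^ n * ((n + K + 1) * (energyDensity n κ h R (r R) (r' R) +
    2 * negPartBound n κ lam (r' R)) + K + κ * (lam ^ (n - 1) * n) * r' R), ?_, ?_⟩
  · exact ((((hint.add (((ha.intg.const_mul _).const_mul κ).const_mul 2)).const_mul _).add
      (integrable_const K)).add (ha.intg.const_mul _)).const_mul _
  · filter_upwards [ha.ae_pos] with R ⟨hR, hr, hr'⟩ a b ha_le hb_le
    have hbound := logDerivBound_le hn hκ hK hh hR hr (ha.le_bc (Ioc_subset_Icc_self hR)) hr'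
    have hdet : 0 < r' R * (r R / R) ^ (n - 1) := mul_pos hr' (pow_pos (div_pos hr hR.1) _)
    have hctrlR := hctrl _ hdet _ (hscale a b ha_le hb_le)
    exact ⟨(abs_mul_energyDensityDx_le hn hκ hR.1 hr hr' (ha_le.trans hδ_half)
        (hb_le.trans hδ_half) hctrlR).trans hbound,
      (abs_mul_energyDensityDq_le hn hκ hR.1 hr hr' (ha_le.trans hδ_half)
        (hb_le.trans hδ_half) hctrlR).trans hbound⟩

theorem IHatE_eq_coe
    (hint : IntegrableOn (fun R => energyDensity n κ h R (r R) (r' R)) (Ioc 0 1)) :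
    IHatE n κ lam h r r' = ((∫ R in Ioc 0 1, energyDensity n κ h R (r R) (r' R)) -
      κ * ((n : ℝ) - 1) / n * lam ^ n * Real.log lam : ℝ) := by
  rw [EReal.coe_sub, ← coe_lintegral_sub_coe_lintegral_neg hint]
  rfl

theorem adm_linear (hlam : 0 < lam) : Adm lam (fun R => lam * R) fun _ => lam where
  intg := by simp
  ftc R hR := by simp [hR.1, mul_comm]
  derivPos := by simp [hlam]
  bc := mul_one lam
  c0 := (mul_zero lam).ge

theorem integrableOn_energyDensity_linear :
    IntegrableOn (fun R => energyDensity n κ h R (lam * R) lam) (Ioc 0 1) := by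
  have hcont : Continuous fun R : ℝ => R ^ (n - 1) * PhiHat n κ h lam lam := by fun_prop
  refine hcont.integrableOn_Ioc.congr_fun (fun R hR => ?_) measurableSet_Ioc
  rw [energyDensity, mul_div_cancel_right₀ _ hR.1.ne']

theorem Adm.lintegral_neg_energyDensity_lt_top (ha : Adm lam r r') (hn : 2 ≤ n) (hκ : 0 ≤ κ)
    (hh : ∀ d : ℝ, 0 < d → 0 ≤ h d) :
    ∫⁻ R in Ioc 0 1, ENNReal.ofReal (-energyDensity n κ h R (r R) (r' R)) < ∞ := by
  have hint : IntegrableOn (fun R => negPartBound n κ lam (r' R)) (Ioc 0 1) :=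
    (ha.intg.const_mul _).const_mul κ
  refine (lintegral_mono_ae ?_).trans_lt hint.2
  filter_upwards [ha.ae_pos] with R ⟨hR, hr, hr'⟩
  exact (ENNReal.ofReal_le_ofReal (neg_energyDensity_le hn hκ hh hR hr
    (ha.le_bc (Ioc_subset_Icc_self hR)) hr')).trans (Real.ofReal_le_enorm _)

theorem IsDetEnergy.isEnergyMinimizer (hh : IsDetEnergy h h') (hn : 2 ≤ n) (hκ : 0 ≤ κ)
    (ha : Adm lam r r')
    (hmin : ∀ s s' : ℝ → ℝ, Adm lam s s' → IHatE n κ lam h r r' ≤ IHatE n κ lam h s s') :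
    IsEnergyMinimizer (energyDensity n κ h) lam r r' := by
  have hlinear : IHatE n κ lam h r r' < ⊤ := by
    refine (hmin _ _ (adm_linear ha.bc_pos)).trans_lt ?_
    rw [IHatE_eq_coe integrableOn_energyDensity_linear]
    exact EReal.coe_lt_top _
  have hint : IntegrableOn (fun R => energyDensity n κ h R (r R) (r' R)) (Ioc 0 1) := by
    refine integrable_of_coe_lintegral_sub_coe_lintegral_neg_ne_top
      (ha.aestronglyMeasurable_comp (hh.isC1Lagrangian hn).continuousOn).aemeasurable
      (ha.lintegral_neg_energyDensity_lt_top hn hκ hh.nonneg) fun htop => hlinear.ne ?_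
    exact (congrArg (· - _) htop).trans (EReal.top_sub_coe _)
  refine ⟨ha, hint, fun s s' hs hs_int => ?_⟩
  have hle := hmin s s' hs
  rw [IHatE_eq_coe hint, IHatE_eq_coe hs_int, EReal.coe_le_coe_iff] at hle
  exact (sub_le_sub_iff_right _).1 hle

end Minimizer

section NullLagrangian

variable {n : ℕ} {κ : ℝ} {h' : ℝ → ℝ}

theorem energyDensityDq_eq {R x q : ℝ} (hR : 0 < R) : energyDensityDq n κ h' R x q =
    R ^ (n - 1) * Phi1 n κ h' q (x / R) + κ * (x ^ (n - 1) * logCoeff n (x / R)) := by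
  have hxR : R ^ (n - 1) * (x / R) ^ (n - 1) = x ^ (n - 1) := by
    rw [← mul_pow, mul_div_cancel₀ _ hR.ne']
  unfold energyDensityDq PhiHat1 Phi1 logCoeff
  rw [← hxR]
  ring

/-- The terms by which `Φ̂` differs from `Φ` form a null Lagrangian: they contribute equally to both
sides of the equilibrium equation. -/
theorem hasDerivWithinAt_mul_logCoeff (hn : 2 ≤ n) {r : ℝ → ℝ} {S : Set ℝ} {R q : ℝ}
    (hR : 0 < R) (hrR : 0 < r R) (hr : HasDerivWithinAt r q S R) :
    HasDerivWithinAt (fun s => κ * (r s ^ (n - 1) * logCoeff n (r s / s)))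
      (energyDensityDx n κ h' R (r R) q -
        ((n : ℝ) - 1) * R ^ (n - 2) * Phi2 n κ h' q (r R / R)) S R := by
  obtain ⟨m, rfl⟩ := Nat.exists_eq_add_of_le' hn
  have hlog := (((hr.div (hasDerivWithinAt_id R S) hR.ne').log (div_pos hrR hR).ne').const_mul
    (((m + 2 : ℕ) : ℝ) - 1)).const_add ((((m + 2 : ℕ) : ℝ) - 1) / ((m + 2 : ℕ) : ℝ))
  refine (((hr.pow (m + 1)).mul hlog).const_mul κ).congr_deriv ?_
  simp only [energyDensityDx, PhiHat2, Phi2, show m + 2 - 1 = m + 1 from rfl,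
    show m + 2 - 2 = m from rfl, show m + 1 - 1 = m from rfl, Pi.pow_apply, Pi.div_apply, id_eq]
  obtain ⟨v, hv⟩ : ∃ v, r R / R = v := ⟨_, rfl⟩
  have hrv : r R = v * R := (div_eq_iff hR.ne').1 hv
  have hv0 : 0 < v := hv ▸ div_pos hrR hR
  rw [hv, hrv]
  push_cast
  field_simp
  ring

theorem hasDerivWithinAt_Phi1_of_energyDensityDq (hn : 2 ≤ n) {r ρ : ℝ → ℝ} {S : Set ℝ}
    (hS : S ⊆ Ioi 0) {R : ℝ} (hR : R ∈ S) (hrR : 0 < r R) (hr : HasDerivWithinAt r (ρ R) S R)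
    (heq : HasDerivWithinAt (fun s => energyDensityDq n κ h' s (r s) (ρ s))
      (energyDensityDx n κ h' R (r R) (ρ R)) S R) :
    HasDerivWithinAt (fun s => s ^ (n - 1) * Phi1 n κ h' (ρ s) (r s / s))
      (((n : ℝ) - 1) * R ^ (n - 2) * Phi2 n κ h' (ρ R) (r R / R)) S R := by
  have hsub := heq.sub (hasDerivWithinAt_mul_logCoeff (κ := κ) (h' := h') hn (hS hR) hrR hr)
  rw [sub_sub_cancel] at hsub
  exact hsub.congr_of_mem (fun s hs => eq_sub_of_add_eq (energyDensityDq_eq (hS hs)).symm) hR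

end NullLagrangian

theorem stmt12_general (n : ℕ) (hn : 2 ≤ n) (κ : ℝ) (hκ : 0 ≤ κ)
    (h h' : ℝ → ℝ) (hh : IsDetEnergy h h') (K γ₀ : ℝ) (hγ₀ : 0 < γ₀)
    (hctrl : ∀ d : ℝ, 0 < d → ∀ c : ℝ, |c - 1| ≤ γ₀ → |d * h' (c * d)| ≤ K * (h d + 1))
    (lam : ℝ) (r r' : ℝ → ℝ) (hadm : Adm lam r r')
    (hmin : ∀ s s' : ℝ → ℝ, Adm lam s s' → IHatE n κ lam h r r' ≤ IHatE n κ lam h s s') :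
    ∃ ρ : ℝ → ℝ, ContinuousOn ρ (Ioc 0 1) ∧
      (∀ R ∈ Ioc (0 : ℝ) 1, HasDerivWithinAt r (ρ R) (Ioc 0 1) R) ∧
      (∀ R ∈ Ioc (0 : ℝ) 1, 0 < ρ R) ∧
      (∀ R ∈ Ioc (0 : ℝ) 1,
        HasDerivWithinAt (fun s => s ^ (n - 1) * Phi1 n κ h' (ρ s) (r s / s))
          (((n : ℝ) - 1) * R ^ (n - 2) * Phi2 n κ h' (ρ R) (r R / R)) (Ioc 0 1) R) := by
  have hmin' : IsEnergyMinimizer (energyDensity n κ h) lam r r' :=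
    hh.isEnergyMinimizer hn hκ hadm hmin
  have hdom : LogDominated (energyDensityDx n κ h') (energyDensityDq n κ h') r r' :=
    logDominated_energyDensity hn hκ hh.nonneg hγ₀ hctrl hadm hmin'.integrable
  obtain ⟨ρ, hρ, hρ_pos, hr, heq⟩ := hmin'.exists_euler_lagrange (hh.isC1Lagrangian hn) hdom
    (fun _ _ => hh.strictMonoOn_energyDensityDq hκ) fun _ _ => hh.surjOn_energyDensityDq hκ
  exact ⟨ρ, hρ, hr, hρ_pos, fun R hR => hasDerivWithinAt_Phi1_of_energyDensityDq hn
    (fun _ hs => hs.1) hR (hadm.pos hR) (hr R hR) (heq R hR)⟩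

/-- a minimizer of the modified functional `Î` over `𝒜_λ` solves the
original (unmodified) radial equilibrium equation. -/
theorem stmt12 (n : ℕ) (hn : 2 ≤ n) (κ : ℝ) (hκ : 0 < κ)
    (h h' h'' : ℝ → ℝ) (hh : GoodH h h' h'')
    (K γ₀ : ℝ) (hK : 0 < K) (hγ₀ : 0 < γ₀)
    (hctrl : ∀ d : ℝ, 0 < d → ∀ c : ℝ, |c - 1| ≤ γ₀ → |d * h' (c * d)| ≤ K * (h d + 1))
    (lam : ℝ) (hlam : 0 < lam) (r r' : ℝ → ℝ) (hadm : Adm lam r r')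
    (hmin : ∀ s s' : ℝ → ℝ, Adm lam s s' → IHatE n κ lam h r r' ≤ IHatE n κ lam h s s') :
    ∃ ρ : ℝ → ℝ, ContinuousOn ρ (Set.Ioc 0 1) ∧
      (∀ R ∈ Set.Ioc (0:ℝ) 1, HasDerivWithinAt r (ρ R) (Set.Ioc 0 1) R) ∧
      (∀ R ∈ Set.Ioc (0:ℝ) 1, 0 < ρ R) ∧
      (∀ R ∈ Set.Ioc (0:ℝ) 1,
        HasDerivWithinAt (fun s => s ^ (n - 1) * Phi1 n κ h' (ρ s) (r s / s))
          (((n:ℝ) - 1) * R ^ (n - 2) * Phi2 n κ h' (ρ R) (r R / R)) (Set.Ioc 0 1) R) :=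
  stmt12_general n hn κ hκ.le h h' hh.isDetEnergy K γ₀ hγ₀ hctrl lam r r' hadm hmin

end
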